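/- arXiv:1605.08509 — 2 statements merged into one kernel-verified Lean document; each statement's English description precedes it below -/
import Mathlib

section
/- Let $n \geq 2$ and let $\beta_1, \dots, \beta_n$ be integers with $\beta_j \geq 3$ for all $j$, and set $\beta_{\max} = \max\{\beta_1,\dots,\beta_n\}$. For $\lambda = (\lambda_1,\dots,\lambda_n) \in \mathbb{R}^n$ define $I(\lambda) = \int_{\mathbb{S}^{n-1}} e^{i(\lambda_1 y_1^{\beta_1} + \cdots + \lambda_n y_n^{\beta_n})} d\sigma(y)$. Then there is a constant $C$ (depending only on $n$ and $\beta_1,\dots,\beta_n$) such that $|I(\lambda)| \leq C |\lambda|^{-1/\beta_{\max}}$ for all $\lambda \neq 0$, where $|\lambda|$ denotes the Euclidean norm of $\lambda$. -/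
open MeasureTheory
open scoped ENNReal

/-!
Rotations preserve the surface measure, so the integral may be averaged over the rotations of any
coordinate plane before it is estimated. On a circle of radius `r` in the `(j, k)`-plane, with
exponents `p = βⱼ` and `q = βₖ`, the phase is, up to a constant, the inner product of the vector
`(λⱼ r^p, λₖ r^q)` with the curve `(cos^p θ, sin^q θ)`. As `p, q ≥ 3`, the derivatives of this curve
of orders up to `N = β_max` span the plane at every point, and by compactness the van der Corput
lemma bounds the circle integral by `C |λⱼ r^p|^(-1/N)`, uniformly in `λₖ`. The loss `r^(-p/N)` on
small circles is absorbed by the weights `κ yⱼ² + yₖ²`, which for `κ = 1 / (n - 1)` sum to `1` over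
`k ≠ j` on the sphere. Finally, `j` is chosen so that `|λⱼ|` is maximal, hence comparable to `|λ|`.
-/

section VanDerCorput

open Set

theorem hasDerivAt_iteratedDeriv {F : Type*} [NormedAddCommGroup F] [NormedSpace ℝ F] {f : ℝ → F}
    {n : WithTop ℕ∞} {k : ℕ} (hf : ContDiff ℝ n f) (hk : k < n) (x : ℝ) :
    HasDerivAt (iteratedDeriv k f) (iteratedDeriv (k + 1) f x) x := by
  rw [iteratedDeriv_succ]
  exact (hf.differentiable_iteratedDeriv k hk x).hasDerivAt

variable {φ : ℝ → ℝ} {a b μ : ℝ}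

-- Integration by parts: `exp (i φ)` is its own derivative divided by `i * deriv φ`.
theorem norm_integral_exp_le_add_integral (hφ : ContDiff ℝ 2 φ) (hab : a ≤ b) (hμ : 0 < μ)
    (h : ∀ x ∈ Icc a b, μ ≤ |deriv φ x|) :
    ‖∫ x in a..b, Complex.exp (Complex.I * φ x)‖ ≤
      2 / μ + ∫ x in a..b, |deriv (deriv φ) x| / deriv φ x ^ 2 := by
  set e : ℝ → ℂ := fun x ↦ Complex.exp (Complex.I * φ x)
  set w : ℝ → ℂ := fun x ↦ Complex.I * deriv φ x
  set w' : ℝ → ℂ := fun x ↦ Complex.I * deriv (deriv φ) x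
  have hφ' : ContDiff ℝ 1 (deriv φ) := hφ.deriv'
  have norm_e (x : ℝ) : ‖e x‖ = 1 := Complex.norm_exp_I_mul_ofReal (φ x)
  have norm_w (x : ℝ) : ‖w x‖ = |deriv φ x| := by simp [w]
  have hw0 : ∀ x ∈ uIcc a b, w x ≠ 0 := fun x hx ↦ norm_ne_zero_iff.mp <|
    norm_w x ▸ (hμ.trans_le (h x (uIcc_of_le hab ▸ hx))).ne'
  have he : ∀ x ∈ uIcc a b, HasDerivAt e (e x * w x) x := fun x _ ↦
    ((hφ.differentiable two_ne_zero x).hasDerivAt.ofReal_comp.const_mul Complex.I).cexp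
  have hw : ∀ x ∈ uIcc a b, HasDerivAt (fun x ↦ (w x)⁻¹) (-w' x / w x ^ 2) x := fun x hx ↦
    ((hφ'.differentiable one_ne_zero x).hasDerivAt.ofReal_comp.const_mul Complex.I).fun_inv
      (hw0 x hx)
  have hwc : Continuous w := by have := hφ'.continuous; fun_prop
  have hwc' : Continuous w' := by have := hφ'.continuous_deriv le_rfl; fun_prop
  have hec : Continuous e := by fun_prop
  have by_parts : ∫ x in a..b, e x =
      (w b)⁻¹ * e b - (w a)⁻¹ * e a - ∫ x in a..b, -w' x / w x ^ 2 * e x := by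
    rw [← intervalIntegral.integral_mul_deriv_eq_deriv_mul hw he
      ((hwc'.neg.continuousOn.div (hwc.pow 2).continuousOn
        fun x hx ↦ pow_ne_zero 2 (hw0 x hx)).intervalIntegrable)
      ((hec.mul hwc).intervalIntegrable a b)]
    refine intervalIntegral.integral_congr fun x hx ↦ ?_
    rw [mul_comm (e x), inv_mul_cancel_left₀ (hw0 x hx)]
  have boundary : ∀ x ∈ Icc a b, ‖(w x)⁻¹ * e x‖ ≤ 1 / μ := fun x hx ↦ by
    rw [norm_mul, norm_e, mul_one, norm_inv, norm_w, one_div]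
    exact inv_anti₀ hμ (h x hx)
  have remainder : ‖∫ x in a..b, -w' x / w x ^ 2 * e x‖ ≤
      ∫ x in a..b, |deriv (deriv φ) x| / deriv φ x ^ 2 := by
    refine (intervalIntegral.norm_integral_le_integral_norm hab).trans_eq ?_
    simp [norm_e, norm_w, w']
  calc ‖∫ x in a..b, e x‖
      ≤ ‖(w b)⁻¹ * e b‖ + ‖(w a)⁻¹ * e a‖ + ‖∫ x in a..b, -w' x / w x ^ 2 * e x‖ := by
        rw [by_parts]
        exact (norm_sub_le _ _).trans (add_le_add_left (norm_sub_le _ _) _)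
    _ ≤ 1 / μ + 1 / μ + ∫ x in a..b, |deriv (deriv φ) x| / deriv φ x ^ 2 := by
        gcongr
        exacts [boundary b (right_mem_Icc.mpr hab), boundary a (left_mem_Icc.mpr hab)]
    _ = _ := by ring

theorem le_or_le_neg_of_le_abs {f : ℝ → ℝ} {s : Set ℝ} (hs : IsPreconnected s)
    (hf : ContinuousOn f s) (hμ : 0 < μ) (h : ∀ x ∈ s, μ ≤ |f x|) :
    (∀ x ∈ s, μ ≤ f x) ∨ ∀ x ∈ s, f x ≤ -μ := by
  by_contra! hcon
  obtain ⟨⟨x, hx, hxμ⟩, y, hy, hyμ⟩ := hcon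
  have hfx : f x ≤ 0 := by
    have := (le_abs.mp (h x hx)).resolve_left hxμ.not_ge
    linarith
  have hfy : 0 ≤ f y := by
    have := (le_abs.mp (h y hy)).resolve_right (by linarith)
    linarith
  obtain ⟨z, hz, hfz⟩ := hs.intermediate_value hx hy hf ⟨hfx, hfy⟩
  exact abs_pos.mp (hμ.trans_le (h z hz)) hfz

-- A derivative of constant sign makes `∫ |deriv f| / f ^ 2` the total variation of `1 / f`.
theorem integral_abs_deriv_div_sq_le {f : ℝ → ℝ} (hf : ContDiff ℝ 1 f) (hab : a ≤ b) (hμ : 0 < μ)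
    (h : ∀ x ∈ Icc a b, μ ≤ |f x|)
    (hsign : (∀ x ∈ Icc a b, 0 ≤ deriv f x) ∨ ∀ x ∈ Icc a b, deriv f x ≤ 0) :
    ∫ x in a..b, |deriv f x| / f x ^ 2 ≤ 2 / μ := by
  have hf0 : ∀ x ∈ uIcc a b, f x ≠ 0 := fun x hx ↦
    abs_pos.mp (hμ.trans_le (h x (uIcc_of_le hab ▸ hx)))
  have ftc : ∫ x in a..b, -deriv f x / f x ^ 2 = (f b)⁻¹ - (f a)⁻¹ :=
    intervalIntegral.integral_eq_sub_of_hasDerivAt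
      (fun x hx ↦ (hf.differentiable one_ne_zero x).hasDerivAt.fun_inv (hf0 x hx))
      (((hf.continuous_deriv le_rfl).neg.continuousOn.div (hf.continuous.pow 2).continuousOn
        fun x hx ↦ pow_ne_zero 2 (hf0 x hx)).intervalIntegrable)
  have variation : |∫ x in a..b, -deriv f x / f x ^ 2| ≤ 2 / μ := by
    have hinv : ∀ x ∈ Icc a b, |(f x)⁻¹| ≤ 1 / μ := fun x hx ↦ by
      rw [abs_inv, one_div]
      exact inv_anti₀ hμ (h x hx)
    have hb := hinv b (right_mem_Icc.mpr hab)
    have ha := hinv a (left_mem_Icc.mpr hab)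
    calc |∫ x in a..b, -deriv f x / f x ^ 2| ≤ |(f b)⁻¹| + |(f a)⁻¹| := ftc ▸ abs_sub _ _
      _ ≤ 1 / μ + 1 / μ := add_le_add hb ha
      _ = 2 / μ := by ring
  rcases hsign with hnonneg | hnonpos
  · have : ∫ x in a..b, |deriv f x| / f x ^ 2 = -∫ x in a..b, -deriv f x / f x ^ 2 := by
      rw [← intervalIntegral.integral_neg]
      refine intervalIntegral.integral_congr fun x hx ↦ ?_
      simp only [abs_of_nonneg (hnonneg x (uIcc_of_le hab ▸ hx)), neg_div, neg_neg]
    exact this ▸ (neg_le_abs _).trans variation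
  · have : ∫ x in a..b, |deriv f x| / f x ^ 2 = ∫ x in a..b, -deriv f x / f x ^ 2 :=
      intervalIntegral.integral_congr fun x hx ↦ by
        simp only [abs_of_nonpos (hnonpos x (uIcc_of_le hab ▸ hx))]
    exact this ▸ (le_abs_self _).trans variation

theorem norm_integral_exp_le_of_le_abs_deriv (hφ : ContDiff ℝ 2 φ) (hab : a ≤ b) (hμ : 0 < μ)
    (h : ∀ x ∈ Icc a b, μ ≤ |deriv φ x|)
    (hsign : (∀ x ∈ Icc a b, 0 ≤ deriv (deriv φ) x) ∨ ∀ x ∈ Icc a b, deriv (deriv φ) x ≤ 0) :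
    ‖∫ x in a..b, Complex.exp (Complex.I * φ x)‖ ≤ 4 / μ :=
  calc ‖∫ x in a..b, Complex.exp (Complex.I * φ x)‖
      ≤ 2 / μ + ∫ x in a..b, |deriv (deriv φ) x| / deriv φ x ^ 2 :=
        norm_integral_exp_le_add_integral hφ hab hμ h
    _ ≤ 2 / μ + 2 / μ := by
        gcongr
        exact integral_abs_deriv_div_sq_le hφ.deriv' hab hμ h hsign
    _ = 4 / μ := by ring

-- `c` is the zero of `f` if it has one, otherwise the endpoint at which `|f|` is smallest.
theorem exists_mul_abs_sub_le_abs_of_le_deriv {f : ℝ → ℝ} (hf : Differentiable ℝ f) (hab : a ≤ b)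
    (h : ∀ x ∈ Icc a b, μ ≤ deriv f x) :
    ∃ c ∈ Icc a b, ∀ x ∈ Icc a b, μ * |x - c| ≤ |f x| := by
  have growth : ∀ x ∈ Icc a b, ∀ y ∈ Icc a b, x ≤ y → μ * (y - x) ≤ f y - f x :=
    (convex_Icc a b).mul_sub_le_image_sub_of_le_deriv hf.continuous.continuousOn
      hf.differentiableOn fun x hx ↦ h x (interior_subset hx)
  have suffices_sign : ∀ c ∈ Icc a b, (0 ≤ f c ∨ c = b) → (f c ≤ 0 ∨ c = a) →
      ∀ x ∈ Icc a b, μ * |x - c| ≤ |f x| := by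
    intro c hc hright hleft x hx
    rcases lt_trichotomy x c with hxc | rfl | hcx
    · have hfc : f c ≤ 0 := hleft.resolve_right (hx.1.trans_lt hxc).ne'
      rw [abs_of_neg (sub_neg.mpr hxc)]
      linarith [growth x hx c hc hxc.le, neg_le_abs (f x)]
    · simp
    · have hfc : 0 ≤ f c := hright.resolve_right (hcx.trans_le hx.2).ne
      rw [abs_of_pos (sub_pos.mpr hcx)]
      linarith [growth c hc x hx hcx.le, le_abs_self (f x)]
  have ha := left_mem_Icc.mpr hab
  have hb := right_mem_Icc.mpr hab
  rcases le_total 0 (f a) with hfa | hfa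
  · exact ⟨a, ha, suffices_sign a ha (.inl hfa) (.inr rfl)⟩
  rcases le_total (f b) 0 with hfb | hfb
  · exact ⟨b, hb, suffices_sign b hb (.inr rfl) (.inl hfb)⟩
  obtain ⟨c, hc, hfc⟩ :=
    isPreconnected_Icc.intermediate_value ha hb hf.continuous.continuousOn ⟨hfa, hfb⟩
  exact ⟨c, hc, suffices_sign c hc (.inl hfc.ge) (.inl hfc.le)⟩

theorem exists_mul_abs_sub_le_abs_of_le_abs_deriv {f : ℝ → ℝ} (hf : ContDiff ℝ 1 f) (hab : a ≤ b)
    (hμ : 0 < μ) (h : ∀ x ∈ Icc a b, μ ≤ |deriv f x|) :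
    ∃ c ∈ Icc a b, ∀ x ∈ Icc a b, μ * |x - c| ≤ |f x| := by
  have hdiff := hf.differentiable one_ne_zero
  rcases le_or_le_neg_of_le_abs isPreconnected_Icc (hf.continuous_deriv le_rfl).continuousOn hμ h
    with hpos | hneg
  · exact exists_mul_abs_sub_le_abs_of_le_deriv hdiff hab hpos
  · simpa using exists_mul_abs_sub_le_abs_of_le_deriv hdiff.neg hab
      fun x hx ↦ by rw [deriv.neg]; exact le_neg_of_le_neg (hneg x hx)

theorem norm_integral_le_of_norm_integral_far_le {E : Type*} [NormedAddCommGroup E]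
    [NormedSpace ℝ E] {f : ℝ → E} {c δ K : ℝ} (hf : Continuous f) (hf1 : ∀ x, ‖f x‖ ≤ 1)
    (hc : c ∈ Icc a b) (hδ : 0 ≤ δ) (hK : 0 ≤ K)
    (hfar : ∀ u v, u ≤ v → Icc u v ⊆ Icc a b → (∀ x ∈ Icc u v, δ ≤ |x - c|) →
      ‖∫ x in u..v, f x‖ ≤ K) :
    ‖∫ x in a..b, f x‖ ≤ 2 * K + 2 * δ := by
  set u := max a (c - δ)
  set v := min b (c + δ)
  have huc : u ≤ c := max_le hc.1 (by linarith)
  have hcv : c ≤ v := le_min hc.2 (by linarith)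
  have left : ‖∫ x in a..u, f x‖ ≤ K := by
    rcases le_total (c - δ) a with hle | hle
    · simpa [u, hle] using hK
    · refine hfar a u (le_max_left _ _) (Icc_subset_Icc_right (huc.trans hc.2)) fun x hx ↦ ?_
      have : x ≤ c - δ := max_eq_right hle ▸ hx.2
      exact le_abs.mpr (.inr (by linarith))
  have middle : ‖∫ x in u..v, f x‖ ≤ 2 * δ := by
    refine (intervalIntegral.norm_integral_le_of_norm_le_const fun x _ ↦ hf1 x).trans ?_
    rw [abs_of_nonneg (by linarith)]
    linarith [le_max_right a (c - δ), min_le_right b (c + δ)]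
  have right : ‖∫ x in v..b, f x‖ ≤ K := by
    rcases le_total b (c + δ) with hle | hle
    · simpa [v, hle] using hK
    · refine hfar v b (min_le_left _ _) (Icc_subset_Icc_left (hc.1.trans hcv)) fun x hx ↦ ?_
      have : c + δ ≤ x := min_eq_right hle ▸ hx.1
      exact le_abs.mpr (.inl (by linarith))
  have hint (s t : ℝ) : IntervalIntegrable f volume s t := hf.intervalIntegrable s t
  rw [← intervalIntegral.integral_add_adjacent_intervals (hint a v) (hint v b),
    ← intervalIntegral.integral_add_adjacent_intervals (hint a u) (hint u v)]
  exact norm_add₃_le.trans (by linarith)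

-- The exponent balances the two contributions to the van der Corput estimate: at distance
-- `δ = μ ^ (-1 / (k + 1))` from the critical point the `k`-th derivative is at least `μ * δ`.
theorem mul_rpow_neg_one_div_succ_rpow {k : ℕ} (hk : k ≠ 0) (hμ : 0 < μ) :
    (μ * μ ^ (-(1 / ((k + 1 : ℕ) : ℝ)))) ^ (-(1 / (k : ℝ))) = μ ^ (-(1 / ((k + 1 : ℕ) : ℝ))) := by
  have hexp : 1 + -(1 / ((k + 1 : ℕ) : ℝ)) = k / (k + 1 : ℕ) := by
    push_cast
    field_simp
    ring
  have hexp0 : (k / (k + 1 : ℕ) : ℝ) ≠ 0 := div_ne_zero (mod_cast hk) (mod_cast k.succ_ne_zero)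
  rw [← Real.rpow_one_add' hμ.le (hexp ▸ hexp0), ← Real.rpow_mul hμ.le, hexp]
  congr 1
  field_simp

theorem norm_integral_exp_le_succ {k : ℕ} (hk : k ≠ 0) {C : ℝ} (hC : 0 ≤ C)
    (hφ : ContDiff ℝ (k + 1 : ℕ) φ) (hab : a ≤ b) (hμ : 0 < μ)
    (h : ∀ x ∈ Icc a b, μ ≤ |iteratedDeriv (k + 1) φ x|)
    (ih : ∀ u v ν, u ≤ v → 0 < ν → (∀ x ∈ Icc u v, ν ≤ |iteratedDeriv k φ x|) →
      ((∀ x ∈ Icc u v, 0 ≤ iteratedDeriv (k + 1) φ x) ∨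
        ∀ x ∈ Icc u v, iteratedDeriv (k + 1) φ x ≤ 0) →
      ‖∫ x in u..v, Complex.exp (Complex.I * φ x)‖ ≤ C * ν ^ (-(1 / (k : ℝ)))) :
    ‖∫ x in a..b, Complex.exp (Complex.I * φ x)‖ ≤
      (2 * C + 2) * μ ^ (-(1 / ((k + 1 : ℕ) : ℝ))) := by
  set δ := μ ^ (-(1 / ((k + 1 : ℕ) : ℝ))) with hδ
  have hδ0 : 0 < δ := Real.rpow_pos_of_pos hμ _
  have hφk : ContDiff ℝ 1 (iteratedDeriv k φ) := by
    rw [iteratedDeriv_eq_iterate]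
    exact ContDiff.iterate_deriv' 1 k (by rwa [add_comm 1 k])
  have hsign : (∀ x ∈ Icc a b, 0 ≤ iteratedDeriv (k + 1) φ x) ∨
      ∀ x ∈ Icc a b, iteratedDeriv (k + 1) φ x ≤ 0 :=
    (le_or_le_neg_of_le_abs isPreconnected_Icc
      (hφ.continuous_iteratedDeriv' (k + 1)).continuousOn hμ h).imp
      (fun hpos x hx ↦ hμ.le.trans (hpos x hx))
      (fun hneg x hx ↦ (hneg x hx).trans (neg_nonpos.mpr hμ.le))
  rw [iteratedDeriv_succ] at h
  obtain ⟨c, hc, hgrowth⟩ := exists_mul_abs_sub_le_abs_of_le_abs_deriv hφk hab hμ h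
  have far : ∀ u v, u ≤ v → Icc u v ⊆ Icc a b → (∀ x ∈ Icc u v, δ ≤ |x - c|) →
      ‖∫ x in u..v, Complex.exp (Complex.I * φ x)‖ ≤ C * δ := by
    intro u v huv hsub hfar
    have hlow : ∀ x ∈ Icc u v, μ * δ ≤ |iteratedDeriv k φ x| := fun x hx ↦
      (mul_le_mul_of_nonneg_left (hfar x hx) hμ.le).trans (hgrowth x (hsub hx))
    have hsign_uv := hsign.imp (fun H x hx ↦ H x (hsub hx)) (fun H x hx ↦ H x (hsub hx))
    simpa only [hδ, mul_rpow_neg_one_div_succ_rpow hk hμ] using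
      ih u v (μ * δ) huv (by positivity) hlow hsign_uv
  have hcont : Continuous fun x ↦ Complex.exp (Complex.I * φ x) := by fun_prop
  calc ‖∫ x in a..b, Complex.exp (Complex.I * φ x)‖ ≤ 2 * (C * δ) + 2 * δ :=
        norm_integral_le_of_norm_integral_far_le hcont
          (fun x ↦ (Complex.norm_exp_I_mul_ofReal _).le) hc hδ0.le (by positivity) far
    _ = (2 * C + 2) * δ := by ring

theorem norm_integral_exp_le_of_le_abs_iteratedDeriv_of_sign {k : ℕ} (hk : k ≠ 0)
    (hφ : ContDiff ℝ (k + 1 : ℕ) φ) (hab : a ≤ b) (hμ : 0 < μ)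
    (h : ∀ x ∈ Icc a b, μ ≤ |iteratedDeriv k φ x|)
    (hsign : (∀ x ∈ Icc a b, 0 ≤ iteratedDeriv (k + 1) φ x) ∨
      ∀ x ∈ Icc a b, iteratedDeriv (k + 1) φ x ≤ 0) :
    ‖∫ x in a..b, Complex.exp (Complex.I * φ x)‖ ≤ (3 * 2 ^ k - 2) * μ ^ (-(1 / (k : ℝ))) := by
  induction k, Nat.one_le_iff_ne_zero.mpr hk using Nat.le_induction generalizing a b μ with
  | base =>
    simp only [iteratedDeriv_succ, iteratedDeriv_zero] at h hsign
    refine (norm_integral_exp_le_of_le_abs_deriv hφ hab hμ h hsign).trans_eq ?_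
    norm_num [Real.rpow_neg_one, div_eq_mul_inv]
  | succ k hk1 ih =>
    have hC : (0 : ℝ) ≤ 3 * 2 ^ k - 2 := by
      linarith [one_le_pow₀ (M₀ := ℝ) one_le_two (n := k)]
    have hφ' : ContDiff ℝ (k + 1 : ℕ) φ := hφ.of_le (mod_cast (k + 1).le_succ)
    have hk0 : k ≠ 0 := Nat.one_le_iff_ne_zero.mp hk1
    refine (norm_integral_exp_le_succ hk0 hC hφ' hab hμ h
      fun u v ν huv hν hlow hs ↦ ih hk0 hφ' huv hν hlow hs).trans_eq ?_
    ring

theorem norm_integral_exp_le_of_le_abs_iteratedDeriv {k : ℕ} (hk : 2 ≤ k) (hφ : ContDiff ℝ k φ)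
    (hab : a ≤ b) (hμ : 0 < μ) (h : ∀ x ∈ Icc a b, μ ≤ |iteratedDeriv k φ x|) :
    ‖∫ x in a..b, Complex.exp (Complex.I * φ x)‖ ≤ (3 * 2 ^ k - 2) * μ ^ (-(1 / (k : ℝ))) := by
  obtain ⟨m, rfl⟩ : ∃ m, k = m + 1 := ⟨k - 1, by omega⟩
  have hC : (0 : ℝ) ≤ 3 * 2 ^ m - 2 := by
    linarith [one_le_pow₀ (M₀ := ℝ) one_le_two (n := m)]
  have hm : m ≠ 0 := by omega
  refine (norm_integral_exp_le_succ hm hC hφ hab hμ h fun u v ν huv hν hlow hs ↦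
    norm_integral_exp_le_of_le_abs_iteratedDeriv_of_sign hm hφ huv hν hlow hs).trans_eq ?_
  ring

end VanDerCorput

section FiniteType

open Set

theorem norm_integral_exp_le_of_abs_deriv_deriv_le {φ : ℝ → ℝ} {a b μ B : ℝ} (hφ : ContDiff ℝ 2 φ)
    (hab : a ≤ b) (hμ : 0 < μ) (h : ∀ x ∈ Icc a b, μ ≤ |deriv φ x|)
    (hB : ∀ x ∈ Icc a b, |deriv (deriv φ) x| ≤ B) :
    ‖∫ x in a..b, Complex.exp (Complex.I * φ x)‖ ≤ 2 / μ + B * (b - a) / μ ^ 2 := by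
  have integrand_le : ∀ x ∈ Icc a b, ‖|deriv (deriv φ) x| / deriv φ x ^ 2‖ ≤ B / μ ^ 2 := by
    intro x hx
    rw [← sq_abs (deriv φ x), Real.norm_of_nonneg (by positivity)]
    have := h x hx
    have := hB x hx
    have hB0 : 0 ≤ B := (abs_nonneg _).trans this
    gcongr
  calc ‖∫ x in a..b, Complex.exp (Complex.I * φ x)‖
      ≤ 2 / μ + ∫ x in a..b, |deriv (deriv φ) x| / deriv φ x ^ 2 :=
        norm_integral_exp_le_add_integral hφ hab hμ h
    _ ≤ 2 / μ + B / μ ^ 2 * |b - a| := by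
        gcongr
        exact (Real.le_norm_self _).trans <| intervalIntegral.norm_integral_le_of_norm_le_const
          fun x hx ↦ integrand_le x (Ioc_subset_Icc_self (uIoc_of_le hab ▸ hx))
    _ = 2 / μ + B * (b - a) / μ ^ 2 := by
        rw [abs_of_nonneg (sub_nonneg.mpr hab)]
        ring

theorem norm_integral_exp_le_of_mem_Icc {φ : ℝ → ℝ} {N k : ℕ} {a b c t M : ℝ}
    (hk : k ∈ Finset.Icc 1 N) (hφ : ContDiff ℝ (N + 1 : ℕ) φ) (hab : a ≤ b) (hc : 0 < c)
    (hc1 : c ≤ 1) (ht : 1 ≤ t) (hlow : ∀ x ∈ Icc a b, c * t ≤ |iteratedDeriv k φ x|)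
    (hup : ∀ x ∈ Icc a b, |iteratedDeriv 2 φ x| ≤ M * t) (hM : M * (b - a) ≤ 1) :
    ‖∫ x in a..b, Complex.exp (Complex.I * φ x)‖ ≤ 3 * 2 ^ N / c ^ 2 * t ^ (-(1 / (N : ℝ))) := by
  obtain ⟨hk1, hkN⟩ := Finset.mem_Icc.mp hk
  have ht0 : 0 < t := zero_lt_one.trans_le ht
  have decay_mono : t ^ (-(1 / (k : ℝ))) ≤ t ^ (-(1 / (N : ℝ))) := by gcongr
  have pow_mono : (2 : ℝ) ^ k ≤ 2 ^ N := pow_le_pow_right₀ one_le_two hkN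
  rcases hk1.eq_or_lt with rfl | hk2
  · simp only [iteratedDeriv_succ, iteratedDeriv_zero] at hlow hup
    calc ‖∫ x in a..b, Complex.exp (Complex.I * φ x)‖
        ≤ 2 / (c * t) + M * t * (b - a) / (c * t) ^ 2 :=
          norm_integral_exp_le_of_abs_deriv_deriv_le
            (hφ.of_le (mod_cast Nat.succ_le_succ hkN)) hab (by positivity) hlow hup
      _ = (2 * c + M * (b - a)) / c ^ 2 * t ^ (-(1 / ((1 : ℕ) : ℝ))) := by
          rw [Nat.cast_one, div_one, Real.rpow_neg_one]
          field_simp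
      _ ≤ 3 * 2 ^ N / c ^ 2 * t ^ (-(1 / (N : ℝ))) := by
          gcongr
          linarith
  · have const_le : c ^ (-(1 / (k : ℝ))) ≤ 1 / c ^ 2 := by
      rw [one_div (c ^ 2), ← Real.rpow_natCast, ← Real.rpow_neg hc.le]
      refine Real.rpow_le_rpow_of_exponent_ge hc hc1 (neg_le_neg ?_)
      exact (div_le_one₀ (by positivity)).mpr (by norm_cast) |>.trans one_le_two
    calc ‖∫ x in a..b, Complex.exp (Complex.I * φ x)‖
        ≤ (3 * 2 ^ k - 2) * (c * t) ^ (-(1 / (k : ℝ))) :=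
          norm_integral_exp_le_of_le_abs_iteratedDeriv hk2
            (hφ.of_le (mod_cast hkN.trans N.le_succ)) hab (by positivity) hlow
      _ = (3 * 2 ^ k - 2) * (c ^ (-(1 / (k : ℝ))) * t ^ (-(1 / (k : ℝ)))) := by
          rw [Real.mul_rpow hc.le ht0.le]
      _ ≤ 3 * 2 ^ N * (1 / c ^ 2 * t ^ (-(1 / (N : ℝ)))) := by
          gcongr
          linarith
      _ = 3 * 2 ^ N / c ^ 2 * t ^ (-(1 / (N : ℝ))) := by ring

theorem half_le_abs_of_abs_hasDerivAt_le {f f' : ℝ → ℝ} {a b μ B : ℝ}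
    (hf : ∀ x, HasDerivAt f (f' x) x) (hB : ∀ x ∈ Icc a b, |f' x| ≤ B) (hμ : μ ≤ |f a|)
    (hlen : B * (b - a) ≤ μ / 2) {x : ℝ} (hx : x ∈ Icc a b) : μ / 2 ≤ |f x| := by
  have hB0 : 0 ≤ B := (abs_nonneg _).trans (hB x hx)
  have increment : |f x - f a| ≤ B * |x - a| :=
    Convex.norm_image_sub_le_of_norm_hasDerivWithin_le (fun y _ ↦ (hf y).hasDerivWithinAt) hB
      (convex_Icc a b) (left_mem_Icc.mpr (hx.1.trans hx.2)) hx
  have : B * |x - a| ≤ B * (b - a) := by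
    rw [abs_of_nonneg (sub_nonneg.mpr hx.1)]
    gcongr
    exact hx.2
  linarith [abs_sub_abs_le_abs_sub (f a) (f x), abs_sub_comm (f x) (f a)]

variable {E : Type*} [NormedAddCommGroup E]

theorem norm_integral_le_nat_mul_of_forall_short [NormedSpace ℝ E] {f : ℝ → E} (hf : Continuous f)
    {A B δ K : ℝ} (hδ : 0 ≤ δ)
    (h : ∀ a b, A ≤ a → a ≤ b → b ≤ B → b - a ≤ δ → ‖∫ x in a..b, f x‖ ≤ K) {m : ℕ} {b : ℝ}
    (hAb : A ≤ b) (hbB : b ≤ B) (hm : b - A ≤ m * δ) : ‖∫ x in A..b, f x‖ ≤ m * K := by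
  induction m generalizing b with
  | zero =>
    obtain rfl : A = b := hAb.antisymm (by simpa using hm)
    simp
  | succ m ih =>
    set d := max A (b - δ)
    have hdb : d ≤ b := max_le hAb (by linarith)
    have hAd : A ≤ d := le_max_left _ _
    have head : ‖∫ x in A..d, f x‖ ≤ m * K := by
      refine ih hAd (hdb.trans hbB) ?_
      push_cast at hm
      rw [sub_le_iff_le_add]
      exact max_le (le_add_of_nonneg_left (by positivity)) (by linarith)
    have tail : ‖∫ x in d..b, f x‖ ≤ K :=
      h d b hAd hdb hbB (by linarith [le_max_right A (b - δ)])
    rw [← intervalIntegral.integral_add_adjacent_intervals (hf.intervalIntegrable A d)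
      (hf.intervalIntegrable d b)]
    push_cast
    linarith [norm_add_le (∫ x in A..d, f x) (∫ x in d..b, f x)]

theorem norm_integral_smul_le_of_norm_primitive_le [NormedSpace ℝ E] [CompleteSpace E]
    {f : ℝ → E} (hf : Continuous f) {ψ : ℝ → ℝ} (hψ : ContDiff ℝ 1 ψ) {a b K : ℝ} (hab : a ≤ b)
    (hK : ∀ x ∈ Icc a b, ‖∫ y in a..x, f y‖ ≤ K) :
    ‖∫ x in a..b, ψ x • f x‖ ≤ (|ψ b| + ∫ x in a..b, |deriv ψ x|) * K := by
  set F : ℝ → E := fun x ↦ ∫ y in a..x, f y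
  have hF (x : ℝ) : HasDerivAt F (f x) x := hf.integral_hasStrictDerivAt a x |>.hasDerivAt
  have hψ' : Continuous (deriv ψ) := hψ.continuous_deriv le_rfl
  have by_parts : ∫ x in a..b, ψ x • f x = ψ b • F b - ∫ x in a..b, deriv ψ x • F x := by
    rw [intervalIntegral.integral_smul_deriv_eq_deriv_smul
      (fun x _ ↦ (hψ.differentiable one_ne_zero x).hasDerivAt) (fun x _ ↦ hF x)
      (hψ'.intervalIntegrable a b) (hf.intervalIntegrable a b)]
    simp [F]
  have boundary : ‖ψ b • F b‖ ≤ |ψ b| * K := by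
    rw [norm_smul, Real.norm_eq_abs]
    gcongr
    exact hK b (right_mem_Icc.mpr hab)
  have remainder : ‖∫ x in a..b, deriv ψ x • F x‖ ≤ (∫ x in a..b, |deriv ψ x|) * K := by
    rw [← intervalIntegral.integral_mul_const]
    refine intervalIntegral.norm_integral_le_of_norm_le hab ?_
      ((hψ'.abs.mul continuous_const).intervalIntegrable a b)
    refine .of_forall fun x hx ↦ ?_
    rw [norm_smul, Real.norm_eq_abs]
    gcongr
    exact hK x (Ioc_subset_Icc_self hx)
  rw [by_parts, add_mul]
  exact (norm_sub_le _ _).trans (add_le_add boundary remainder)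

theorem exists_pos_forall_norm_iteratedDeriv_le [NormedSpace ℝ E] {f : ℝ → E} {n : ℕ}
    (hf : ContDiff ℝ n f) {s : Set ℝ} (hs : IsCompact s) :
    ∃ M > 0, ∀ k ≤ n, ∀ x ∈ s, ‖iteratedDeriv k f x‖ ≤ M := by
  choose! M hM using fun k (hk : k ≤ n) ↦
    hs.exists_bound_of_continuousOn (hf.continuous_iteratedDeriv k (mod_cast hk)).continuousOn
  refine ⟨1 + ∑ k ∈ Finset.range (n + 1), |M k|, by positivity, fun k hk x hx ↦ ?_⟩
  have := Finset.single_le_sum (fun j _ ↦ abs_nonneg (M j))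
    (Finset.mem_range.mpr (Nat.lt_succ_of_le hk))
  linarith [hM k hk x hx, le_abs_self (M k)]

variable [InnerProductSpace ℝ E] {Γ : ℝ → E} {N : ℕ} {A B : ℝ}

/-- A curve has finite type at most `N` at `x` if its derivatives of orders `1, …, N` at `x` span
the space; this is phrased dually, as the absence of a nonzero vector orthogonal to all of them,
so that it speaks directly about the phases `⟪u, Γ⟫`. -/
def IsFiniteTypeAt (N : ℕ) (Γ : ℝ → E) (x : ℝ) : Prop :=
  ∀ u ≠ 0, ∃ k ∈ Finset.Icc 1 N, inner ℝ u (iteratedDeriv k Γ x) ≠ 0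

theorem iteratedDeriv_inner_left {k : ℕ} (hΓ : ContDiff ℝ k Γ) (u : E) (x : ℝ) :
    iteratedDeriv k (fun y ↦ inner ℝ u (Γ y)) x = inner ℝ u (iteratedDeriv k Γ x) := by
  simp only [iteratedDeriv_eq_iteratedFDeriv]
  exact congrArg (fun m ↦ m fun _ ↦ 1)
    ((innerSL ℝ u).iteratedFDeriv_comp_left hΓ.contDiffAt le_rfl)

theorem exists_pos_forall_mul_norm_le_abs_inner [FiniteDimensional ℝ E] {s : Set ℝ}
    (hs : IsCompact s) (hΓ : ContDiff ℝ N Γ) (h : ∀ x ∈ s, IsFiniteTypeAt N Γ x) :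
    ∃ c > 0, ∀ u ≠ 0, ∀ x ∈ s, ∃ k ∈ Finset.Icc 1 N,
      c * ‖u‖ ≤ |inner ℝ u (iteratedDeriv k Γ x)| := by
  set g : E × ℝ → ℝ := fun z ↦ ∑ k ∈ Finset.Icc 1 N, |inner ℝ z.1 (iteratedDeriv k Γ z.2)|
  have hg : Continuous g := continuous_finsetSum _ fun k hk ↦ by
    have := hΓ.continuous_iteratedDeriv k (mod_cast (Finset.mem_Icc.mp hk).2)
    fun_prop
  have hg0 : ∀ z ∈ Metric.sphere (0 : E) 1 ×ˢ s, 0 < g z := fun z hz ↦ by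
    obtain ⟨k, hk, hne⟩ := h z.2 hz.2 z.1 (ne_zero_of_mem_unit_sphere ⟨z.1, hz.1⟩)
    exact Finset.sum_pos' (fun _ _ ↦ abs_nonneg _) ⟨k, hk, abs_pos.mpr hne⟩
  obtain ⟨c, hc, hle⟩ :=
    ((isCompact_sphere (0 : E) 1).prod hs).exists_forall_le' hg.continuousOn hg0
  refine ⟨c / (N + 1), by positivity, fun u hu x hx ↦ ?_⟩
  have hu0 : 0 < ‖u‖ := norm_pos_iff.mpr hu
  have unit : ‖u‖⁻¹ • u ∈ Metric.sphere (0 : E) 1 := by simp [norm_smul, hu]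
  have sum_lt : ∑ k ∈ Finset.Icc 1 N, c / (N + 1) <
      ∑ k ∈ Finset.Icc 1 N, |inner ℝ (‖u‖⁻¹ • u) (iteratedDeriv k Γ x)| := by
    refine lt_of_lt_of_le ?_ (hle (‖u‖⁻¹ • u, x) ⟨unit, hx⟩)
    rw [Finset.sum_const, Nat.card_Icc, nsmul_eq_mul, add_tsub_cancel_right, mul_div_assoc',
      div_lt_iff₀ (by positivity)]
    linarith
  obtain ⟨k, hk, hlt⟩ := Finset.exists_lt_of_sum_lt sum_lt
  refine ⟨k, hk, ?_⟩
  rw [real_inner_smul_left, abs_mul, abs_inv, abs_norm, ← div_eq_inv_mul] at hlt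
  exact ((lt_div_iff₀ hu0).mp hlt).le

-- On an interval this short the derivative that is large at `a` stays large.
theorem norm_integral_exp_inner_le_of_short (hΓ : ContDiff ℝ (N + 1 : ℕ) Γ) {a b c M : ℝ} {u : E}
    (hab : a ≤ b) (hc : 0 < c) (hc1 : c ≤ 1) (hu : 1 ≤ ‖u‖)
    (hlow : ∃ k ∈ Finset.Icc 1 N, c * ‖u‖ ≤ |inner ℝ u (iteratedDeriv k Γ a)|)
    (hup : ∀ k ≤ N + 1, ∀ x ∈ Icc a b, ‖iteratedDeriv k Γ x‖ ≤ M) (hlen : M * (b - a) ≤ c / 2) :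
    ‖∫ x in a..b, Complex.exp (Complex.I * (inner ℝ u (Γ x) : ℝ))‖ ≤
      3 * 2 ^ N / (c / 2) ^ 2 * ‖u‖ ^ (-(1 / (N : ℝ))) := by
  obtain ⟨k, hk, hlow⟩ := hlow
  obtain ⟨hk1, hkN⟩ := Finset.mem_Icc.mp hk
  set φ : ℝ → ℝ := fun x ↦ inner ℝ u (Γ x)
  have hφ : ContDiff ℝ (N + 1 : ℕ) φ := contDiff_const.inner ℝ hΓ
  have hderiv {i : ℕ} (hi : i ≤ N + 1) (x : ℝ) :
      iteratedDeriv i φ x = inner ℝ u (iteratedDeriv i Γ x) :=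
    iteratedDeriv_inner_left (hΓ.of_le (mod_cast hi)) u x
  have hφup : ∀ i ≤ N + 1, ∀ x ∈ Icc a b, |iteratedDeriv i φ x| ≤ M * ‖u‖ := fun i hi x hx ↦ by
    rw [hderiv hi, mul_comm]
    exact (abs_real_inner_le_norm _ _).trans (by gcongr; exact hup i hi x hx)
  have hφlow : ∀ x ∈ Icc a b, c / 2 * ‖u‖ ≤ |iteratedDeriv k φ x| := fun x hx ↦ by
    rw [div_mul_eq_mul_div]
    refine half_le_abs_of_abs_hasDerivAt_le
      (hasDerivAt_iteratedDeriv hφ (mod_cast Nat.lt_succ_of_le hkN)) (hφup (k + 1) (by lia))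
      (by rwa [hderiv (by lia)]) ?_ hx
    linarith [mul_le_mul_of_nonneg_right hlen (norm_nonneg u)]
  exact norm_integral_exp_le_of_mem_Icc hk hφ hab (by positivity) (by linarith) hu hφlow
    (hφup 2 (by lia)) (by linarith)

theorem exists_norm_integral_exp_inner_le [FiniteDimensional ℝ E] (hΓ : ContDiff ℝ (N + 1 : ℕ) Γ)
    (h : ∀ x ∈ Icc A B, IsFiniteTypeAt N Γ x) :
    ∃ K ≥ 0, ∀ u : E, 1 ≤ ‖u‖ → ∀ b ∈ Icc A B,
      ‖∫ x in A..b, Complex.exp (Complex.I * (inner ℝ u (Γ x) : ℝ))‖ ≤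
        K * ‖u‖ ^ (-(1 / (N : ℝ))) := by
  obtain ⟨c₀, hc₀, hlow⟩ := exists_pos_forall_mul_norm_le_abs_inner isCompact_Icc
    (hΓ.of_le (mod_cast N.le_succ)) h
  obtain ⟨M, hM, hup⟩ :=
    exists_pos_forall_norm_iteratedDeriv_le hΓ (isCompact_Icc (a := A) (b := B))
  set c := min c₀ 1
  have hc : 0 < c := lt_min hc₀ one_pos
  set δ := c / 2 / M with hδ_def
  have hδ : 0 < δ := by positivity
  obtain ⟨m, hm⟩ := exists_nat_ge ((B - A) / δ)
  refine ⟨m * (3 * 2 ^ N / (c / 2) ^ 2), by positivity, fun u hu b hb ↦ ?_⟩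
  have hu0 : u ≠ 0 := norm_pos_iff.mp (one_pos.trans_le hu)
  rw [mul_assoc]
  refine norm_integral_le_nat_mul_of_forall_short ?_ hδ.le (fun a d hAa had hdB hlen ↦ ?_) hb.1 hb.2
    ((sub_le_sub_right hb.2 A).trans ((div_le_iff₀ hδ).mp hm))
  · have := hΓ.continuous
    fun_prop
  · obtain ⟨k, hk, hle⟩ := hlow u hu0 a ⟨hAa, had.trans hdB⟩
    refine norm_integral_exp_inner_le_of_short hΓ had hc (min_le_right _ _) hu
      ⟨k, hk, le_trans (by gcongr; exact min_le_left _ _) hle⟩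
      (fun i hi x hx ↦ hup i hi x ⟨hAa.trans hx.1, hx.2.trans hdB⟩) ?_
    rwa [hδ_def, le_div_iff₀ hM, mul_comm] at hlen

theorem exists_norm_integral_smul_exp_inner_le [FiniteDimensional ℝ E]
    (hΓ : ContDiff ℝ (N + 1 : ℕ) Γ) (h : ∀ x ∈ Icc A B, IsFiniteTypeAt N Γ x) {ψ : ℝ → ℝ}
    (hψ : ContDiff ℝ 1 ψ) (hAB : A ≤ B) :
    ∃ C ≥ 0, ∀ u : E, u ≠ 0 →
      ‖∫ x in A..B, ψ x • Complex.exp (Complex.I * (inner ℝ u (Γ x) : ℝ))‖ ≤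
        C * ‖u‖ ^ (-(1 / (N : ℝ))) := by
  obtain ⟨K, hK, hdecay⟩ := exists_norm_integral_exp_inner_le hΓ h
  set V := |ψ B| + ∫ x in A..B, |deriv ψ x|
  have hV : 0 ≤ V :=
    add_nonneg (abs_nonneg _) (intervalIntegral.integral_nonneg hAB fun _ _ ↦ abs_nonneg _)
  have hcont (u : E) : Continuous fun x ↦ Complex.exp (Complex.I * (inner ℝ u (Γ x) : ℝ)) := by
    have := hΓ.continuous
    fun_prop
  refine ⟨V * K + V * (B - A), by have := sub_nonneg.mpr hAB; positivity, fun u hu ↦ ?_⟩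
  have hu0 : 0 < ‖u‖ := norm_pos_iff.mpr hu
  rcases le_total 1 ‖u‖ with hu1 | hu1
  · calc _ ≤ V * (K * ‖u‖ ^ (-(1 / (N : ℝ)))) :=
          norm_integral_smul_le_of_norm_primitive_le (hcont u) hψ hAB (hdecay u hu1)
      _ ≤ (V * K + V * (B - A)) * ‖u‖ ^ (-(1 / (N : ℝ))) := by
          rw [← mul_assoc]
          gcongr
          exact le_add_of_nonneg_right (mul_nonneg hV (sub_nonneg.mpr hAB))
  · have trivial_bound : ∀ x ∈ Icc A B,
        ‖∫ y in A..x, Complex.exp (Complex.I * (inner ℝ u (Γ y) : ℝ))‖ ≤ B - A := fun x hx ↦ by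
      refine (intervalIntegral.norm_integral_le_of_norm_le_const
        fun y _ ↦ (Complex.norm_exp_I_mul_ofReal _).le).trans ?_
      rw [one_mul, abs_of_nonneg (sub_nonneg.mpr hx.1)]
      exact sub_le_sub_right hx.2 A
    calc _ ≤ V * (B - A) :=
          norm_integral_smul_le_of_norm_primitive_le (hcont u) hψ hAB trivial_bound
      _ ≤ V * K + V * (B - A) := le_add_of_nonneg_left (by positivity)
      _ ≤ (V * K + V * (B - A)) * ‖u‖ ^ (-(1 / (N : ℝ))) :=
          le_mul_of_one_le_right (by have := sub_nonneg.mpr hAB; positivity)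
            (Real.one_le_rpow_of_pos_of_le_one_of_nonpos hu0 hu1 (by simp))

end FiniteType

section PowerCurve

open Set

theorem iteratedDeriv_pow_ne_zero_of_deriv_ne_zero {𝕜 : Type*} [NontriviallyNormedField 𝕜]
    [CompleteSpace 𝕜] [CharZero 𝕜] {h : 𝕜 → 𝕜} {x : 𝕜} (hh : AnalyticAt 𝕜 h x) (h0 : h x = 0)
    (h1 : deriv h x ≠ 0) (n : ℕ) : iteratedDeriv n (fun y ↦ h y ^ n) x ≠ 0 := by
  have order_eq : analyticOrderAt (h ^ n) x = n := by
    rw [analyticOrderAt_pow hh, hh.analyticOrderAt_eq_one_of_zero_deriv_ne_zero h0 h1]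
    simp
  exact ((analyticOrderAt_eq_nat_iff_iteratedDeriv_eq_zero (hh.pow n)).mp order_eq).2

theorem deriv_cos_pow_add_sin_pow (a b : ℝ) (m l : ℕ) (θ : ℝ) :
    deriv (fun x ↦ a * Real.cos x ^ (m + 2) + b * Real.sin x ^ (l + 2)) θ =
      b * (l + 2) * Real.sin θ ^ (l + 1) * Real.cos θ -
        a * (m + 2) * Real.cos θ ^ (m + 1) * Real.sin θ := by
  refine ((((Real.hasDerivAt_cos θ).fun_pow (m + 2)).const_mul a).add
    (((Real.hasDerivAt_sin θ).fun_pow (l + 2)).const_mul b)).deriv.trans ?_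
  simp only [Nat.add_succ_sub_one]
  push_cast
  ring

theorem iteratedDeriv_two_cos_pow_add_sin_pow (a b : ℝ) (m l : ℕ) (θ : ℝ) :
    iteratedDeriv 2 (fun x ↦ a * Real.cos x ^ (m + 2) + b * Real.sin x ^ (l + 2)) θ =
      b * (l + 2) * Real.sin θ ^ l * ((l + 1) * Real.cos θ ^ 2 - Real.sin θ ^ 2) +
        a * (m + 2) * Real.cos θ ^ m * ((m + 1) * Real.sin θ ^ 2 - Real.cos θ ^ 2) := by
  rw [iteratedDeriv_succ, iteratedDeriv_one, funext (deriv_cos_pow_add_sin_pow a b m l)]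
  refine (((((Real.hasDerivAt_sin θ).fun_pow (l + 1)).const_mul _).mul
    (Real.hasDerivAt_cos θ)).sub
    ((((Real.hasDerivAt_cos θ).fun_pow (m + 1)).const_mul _).mul
      (Real.hasDerivAt_sin θ))).deriv.trans ?_
  simp only [add_tsub_cancel_right]
  push_cast
  ring

theorem eq_zero_of_deriv_eq_zero_of_iteratedDeriv_two_eq_zero {a b θ : ℝ} {m l : ℕ} (hm : m ≠ 0)
    (hs : Real.sin θ ≠ 0) (hc : Real.cos θ ≠ 0)
    (h1 : deriv (fun x ↦ a * Real.cos x ^ (m + 2) + b * Real.sin x ^ (l + 2)) θ = 0)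
    (h2 : iteratedDeriv 2 (fun x ↦ a * Real.cos x ^ (m + 2) + b * Real.sin x ^ (l + 2)) θ = 0) :
    a = 0 ∧ b = 0 := by
  rw [deriv_cos_pow_add_sin_pow] at h1
  rw [iteratedDeriv_two_cos_pow_add_sin_pow] at h2
  set s := Real.sin θ
  set c := Real.cos θ
  have balance : b * (l + 2) * s ^ l = a * (m + 2) * c ^ m := by
    refine mul_right_cancel₀ (mul_ne_zero hs hc) ?_
    linear_combination h1
  have curvature : a * (m + 2) * c ^ m * (m * s ^ 2 + l * c ^ 2) = 0 := by
    linear_combination h2 - ((l + 1) * c ^ 2 - s ^ 2) * balance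
  have : (0 : ℝ) < m := mod_cast Nat.pos_of_ne_zero hm
  have positive : 0 < m * s ^ 2 + l * c ^ 2 := by positivity
  have ha : a = 0 := by
    simpa [hc, positive.ne', (by positivity : (m : ℝ) + 2 ≠ 0)] using curvature
  refine ⟨ha, ?_⟩
  simpa [ha, hs, (by positivity : (l : ℝ) + 2 ≠ 0)] using balance

theorem exists_iteratedDeriv_cos_pow_add_sin_pow_ne_zero {p q : ℕ} (hp : 3 ≤ p) (hq : 3 ≤ q)
    {a b : ℝ} (hab : a ≠ 0 ∨ b ≠ 0) (θ : ℝ) :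
    ∃ k ∈ Finset.Icc 1 (max p q),
      iteratedDeriv k (fun x ↦ a * Real.cos x ^ p + b * Real.sin x ^ q) θ ≠ 0 := by
  by_contra! vanish
  have h1 := vanish 1 (Finset.mem_Icc.mpr ⟨le_rfl, by lia⟩)
  have h2 := vanish 2 (Finset.mem_Icc.mpr ⟨one_le_two, by lia⟩)
  have hvp := vanish p (Finset.mem_Icc.mpr ⟨by lia, le_max_left p q⟩)
  have hvq := vanish q (Finset.mem_Icc.mpr ⟨by lia, le_max_right p q⟩)
  obtain ⟨m, rfl⟩ := Nat.exists_eq_add_of_le' hp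
  obtain ⟨l, rfl⟩ := Nat.exists_eq_add_of_le' hq
  suffices a = 0 ∧ b = 0 by tauto
  have hsc := Real.sin_sq_add_cos_sq θ
  have h2' := h2
  rw [iteratedDeriv_two_cos_pow_add_sin_pow] at h2'
  by_cases hs : Real.sin θ = 0
  · have hc : Real.cos θ ≠ 0 := fun hc ↦ by simp [hs, hc] at hsc
    have ha : a = 0 := by
      simpa [hs, hc, (by positivity : ((m + 1 : ℕ) : ℝ) + 2 ≠ 0), -Nat.cast_add] using h2'
    refine ⟨ha, ?_⟩
    simpa [ha, iteratedDeriv_pow_ne_zero_of_deriv_ne_zero Real.analyticAt_sin hs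
      (by rwa [Real.deriv_sin]) (l + 3)] using hvq
  by_cases hc : Real.cos θ = 0
  · have hb : b = 0 := by
      simpa [hs, hc, (by positivity : ((l + 1 : ℕ) : ℝ) + 2 ≠ 0), -Nat.cast_add] using h2'
    refine ⟨?_, hb⟩
    simpa [hb, iteratedDeriv_pow_ne_zero_of_deriv_ne_zero Real.analyticAt_cos hc
      (by rwa [Real.deriv_cos', neg_ne_zero]) (m + 3)] using hvp
  exact eq_zero_of_deriv_eq_zero_of_iteratedDeriv_two_eq_zero m.succ_ne_zero hs hc
    (by rwa [iteratedDeriv_one] at h1) h2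

/-- The image of the unit circle under `(x, y) ↦ (x ^ p, y ^ q)`: the curve traced by the two
monomials of the phase that vary under a rotation of a coordinate plane. -/
noncomputable def powerCurve (p q : ℕ) (θ : ℝ) : EuclideanSpace ℝ (Fin 2) :=
  !₂[Real.cos θ ^ p, Real.sin θ ^ q]

theorem inner_powerCurve (u : EuclideanSpace ℝ (Fin 2)) (p q : ℕ) (θ : ℝ) :
    inner ℝ u (powerCurve p q θ) = u 0 * Real.cos θ ^ p + u 1 * Real.sin θ ^ q := by
  simp [powerCurve, PiLp.inner_apply, mul_comm]

theorem contDiff_powerCurve (p q : ℕ) {n : WithTop ℕ∞} : ContDiff ℝ n (powerCurve p q) := by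
  refine contDiff_euclidean.mpr fun i ↦ ?_
  fin_cases i
  · exact Real.contDiff_cos.pow p
  · exact Real.contDiff_sin.pow q

theorem isFiniteTypeAt_powerCurve {p q N : ℕ} (hp : 3 ≤ p) (hq : 3 ≤ q) (hpN : p ≤ N)
    (hqN : q ≤ N) (θ : ℝ) : IsFiniteTypeAt N (powerCurve p q) θ := by
  intro u hu
  have hu' : u 0 ≠ 0 ∨ u 1 ≠ 0 := by
    by_contra! h
    exact hu (by ext i; fin_cases i; exacts [h.1, h.2])
  obtain ⟨k, hk, hne⟩ := exists_iteratedDeriv_cos_pow_add_sin_pow_ne_zero hp hq hu' θ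
  refine ⟨k, Finset.Icc_subset_Icc_right (max_le hpN hqN) hk, ?_⟩
  rw [← iteratedDeriv_inner_left (contDiff_powerCurve p q)]
  simpa only [inner_powerCurve] using hne

theorem exists_norm_integral_smul_exp_cos_pow_add_sin_pow_le {p q N : ℕ} (hp : 3 ≤ p) (hq : 3 ≤ q)
    (hpN : p ≤ N) (hqN : q ≤ N) {ψ : ℝ → ℝ} (hψ : ContDiff ℝ 1 ψ) :
    ∃ C ≥ 0, ∀ a b : ℝ, a ≠ 0 →
      ‖∫ θ in 0..2 * Real.pi, ψ θ •
        Complex.exp (Complex.I * (a * Real.cos θ ^ p + b * Real.sin θ ^ q : ℝ))‖ ≤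
          C * |a| ^ (-(1 / (N : ℝ))) := by
  obtain ⟨C, hC, hdecay⟩ := exists_norm_integral_smul_exp_inner_le (contDiff_powerCurve p q)
    (fun θ _ ↦ isFiniteTypeAt_powerCurve hp hq hpN hqN θ) hψ Real.two_pi_pos.le
  refine ⟨C, hC, fun a b ha ↦ ?_⟩
  have abs_le_norm : |a| ≤ ‖!₂[a, b]‖ := PiLp.norm_apply_le !₂[a, b] 0
  have ha0 : 0 < |a| := abs_pos.mpr ha
  have := hdecay !₂[a, b] (norm_pos_iff.mp (ha0.trans_le abs_le_norm))
  simp only [inner_powerCurve] at this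
  exact this.trans (mul_le_mul_of_nonneg_left
    (Real.rpow_le_rpow_of_nonpos ha0 abs_le_norm (by simp)) hC)

end PowerCurve

section SphereMeasure

theorem hausdorffMeasure_image_lt_top_of_contDiff {ι E : Type*} [Fintype ι] [NormedAddCommGroup E]
    [NormedSpace ℝ E] [MeasurableSpace E] [BorelSpace E] {f : (ι → ℝ) → E} (hf : ContDiff ℝ 1 f)
    {s : Set (ι → ℝ)} (hs : IsCompact s) : μH[Fintype.card ι] (f '' s) < ∞ := by
  obtain ⟨K, hK⟩ := hf.locallyLipschitz.locallyLipschitzOn.exists_lipschitzOnWith_of_compact hs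
  refine (hK.hausdorffMeasure_image_le (Nat.cast_nonneg _)).trans_lt ?_
  rw [hausdorffMeasure_pi_real]
  exact ENNReal.mul_lt_top (ENNReal.rpow_lt_top_of_nonneg (Nat.cast_nonneg _) ENNReal.coe_ne_top)
    hs.measure_lt_top

/-- The central projection to the unit sphere of the hyperplane on which the `i`-th coordinate is
equal to `t`. For `t = ±1` these parametrize the sphere by the faces of the cube `[-1, 1]ⁿ`. -/
noncomputable def centralProjection {m : ℕ} (i : Fin (m + 1)) (t : ℝ) (x : Fin m → ℝ) :
    EuclideanSpace ℝ (Fin (m + 1)) :=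
  let v : EuclideanSpace ℝ (Fin (m + 1)) := WithLp.toLp 2 (i.insertNth t x)
  ‖v‖⁻¹ • v

theorem contDiff_centralProjection {m : ℕ} (i : Fin (m + 1)) {t : ℝ} (ht : t ≠ 0)
    {n : WithTop ℕ∞} : ContDiff ℝ n (centralProjection i t) := by
  set v : (Fin m → ℝ) → EuclideanSpace ℝ (Fin (m + 1)) := fun x ↦ WithLp.toLp 2 (i.insertNth t x)
  have hv : ContDiff ℝ n v := contDiff_euclidean.mpr fun l ↦ by
    refine i.succAboveCases ?_ (fun l ↦ ?_) l
    · simpa [v] using contDiff_const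
    · simpa [v] using contDiff_apply ℝ ℝ l
  have hv0 (x : Fin m → ℝ) : v x ≠ 0 := fun h ↦ ht (by simpa [v] using congr($h i))
  exact ((hv.norm ℝ hv0).inv fun x ↦ norm_ne_zero_iff.mpr (hv0 x)).smul hv

theorem exists_mem_image_centralProjection {m : ℕ} {y : EuclideanSpace ℝ (Fin (m + 1))}
    (hy : ‖y‖ = 1) :
    ∃ i, ∃ t : ℝ, |t| = 1 ∧ y ∈ centralProjection i t '' Metric.closedBall 0 1 := by
  obtain ⟨i, hi⟩ := Finite.exists_max fun i ↦ |y i|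
  have hyi : 0 < |y i| := by
    refine (abs_nonneg _).lt_of_ne fun h ↦ ?_
    have : y = 0 := by ext l; exact abs_nonpos_iff.mp (h ▸ hi l)
    simp [this] at hy
  refine ⟨i, |y i|⁻¹ * y i, ?_, fun l ↦ |y i|⁻¹ * y (i.succAbove l), ?_, ?_⟩
  · rw [abs_mul, abs_inv, abs_abs, inv_mul_cancel₀ hyi.ne']
  · refine mem_closedBall_zero_iff.mpr ((pi_norm_le_iff_of_nonneg zero_le_one).mpr fun l ↦ ?_)
    rw [Real.norm_eq_abs, abs_mul, abs_inv, abs_abs, ← div_eq_inv_mul]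
    exact (div_le_one₀ hyi).mpr (hi _)
  · have scaled : WithLp.toLp 2 (i.insertNth (|y i|⁻¹ * y i)
        fun l ↦ |y i|⁻¹ * y (i.succAbove l)) = |y i|⁻¹ • y := by
      ext l
      refine i.succAboveCases ?_ (fun l ↦ ?_) l <;> simp
    simp only [centralProjection, scaled]
    rw [norm_smul, hy, mul_one, norm_inv, norm_abs_eq_norm, inv_inv, smul_smul, Real.norm_eq_abs,
      mul_inv_cancel₀ hyi.ne', one_smul]

theorem hausdorffMeasure_sphere_lt_top (m : ℕ) :
    μH[m] (Metric.sphere (0 : EuclideanSpace ℝ (Fin (m + 1))) 1) < ∞ := by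
  have cover : Metric.sphere (0 : EuclideanSpace ℝ (Fin (m + 1))) 1 ⊆
      ⋃ i, ⋃ t ∈ ({1, -1} : Set ℝ), centralProjection i t '' Metric.closedBall 0 1 := by
    intro y hy
    obtain ⟨i, t, ht, hyt⟩ := exists_mem_image_centralProjection (mem_sphere_zero_iff_norm.mp hy)
    exact Set.mem_iUnion.mpr ⟨i, Set.mem_biUnion (eq_or_eq_neg_of_abs_eq ht) hyt⟩
  refine (measure_mono cover).trans_lt ((measure_iUnion_fintype_le _ _).trans_lt ?_)
  refine ENNReal.sum_lt_top.mpr fun i _ ↦ measure_biUnion_lt_top (Set.toFinite _)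
    fun t ht ↦ ?_
  have ht0 : t ≠ 0 := by
    rintro rfl
    simp at ht
  simpa using hausdorffMeasure_image_lt_top_of_contDiff (contDiff_centralProjection i ht0)
    (isCompact_closedBall (0 : Fin m → ℝ) 1)

end SphereMeasure

section Averaging

variable {E F : Type*} [NormedAddCommGroup E] [NormedSpace ℝ E] [MeasurableSpace E] [BorelSpace E]
  [NormedAddCommGroup F] [NormedSpace ℝ F]

theorem setIntegral_sphere_comp_linearIsometryEquiv (e : E ≃ₗᵢ[ℝ] E) (d : ℝ) (f : E → F) :
    ∫ y in Metric.sphere (0 : E) 1, f (e y) ∂μH[d] =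
      ∫ y in Metric.sphere (0 : E) 1, f y ∂μH[d] := by
  have := (e.toIsometryEquiv.measurePreserving_hausdorffMeasure d).setIntegral_preimage_emb
    e.toHomeomorph.measurableEmbedding f (Metric.sphere 0 1)
  simpa using this

theorem mul_norm_setIntegral_sphere_le [ProperSpace E] [CompleteSpace F] {R : ℝ → E ≃ₗᵢ[ℝ] E}
    (hR : Continuous fun z : ℝ × E ↦ R z.1 z.2) {d : ℝ}
    (hd : μH[d] (Metric.sphere (0 : E) 1) < ∞) {f : E → F} (hf : Continuous f) {T K : ℝ}
    (hT : 0 ≤ T) (hK : ∀ y ∈ Metric.sphere (0 : E) 1, ‖∫ θ in 0..T, f (R θ y)‖ ≤ K) :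
    T * ‖∫ y in Metric.sphere (0 : E) 1, f y ∂μH[d]‖ ≤
      K * μH[d].real (Metric.sphere (0 : E) 1) := by
  set S := Metric.sphere (0 : E) 1
  have : IsFiniteMeasure (μH[d].restrict S) := isFiniteMeasure_restrict.mpr hd.ne
  obtain ⟨M, hM⟩ := (isCompact_sphere (0 : E) 1).exists_bound_of_continuousOn hf.continuousOn
  have integrable : Integrable (Function.uncurry fun θ y ↦ f (R θ y))
      ((volume.restrict (Set.Ioc 0 T)).prod (μH[d].restrict S)) := by
    refine .of_bound (hf.comp hR).aestronglyMeasurable M ?_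
    have mem_sphere : ∀ᵐ z ∂(volume.restrict (Set.Ioc 0 T)).prod (μH[d].restrict S), z.2 ∈ S :=
      Measure.quasiMeasurePreserving_snd.ae (ae_restrict_mem Metric.isClosed_sphere.measurableSet)
    filter_upwards [mem_sphere] with z hz
    exact hM _ (by simpa [S] using hz)
  have fubini : T • ∫ y in S, f y ∂μH[d] = ∫ y in S, (∫ θ in 0..T, f (R θ y)) ∂μH[d] := by
    simp only [intervalIntegral.integral_of_le hT]
    rw [← integral_integral_swap integrable]
    simp [S, setIntegral_sphere_comp_linearIsometryEquiv, hT]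
  rw [← Real.norm_of_nonneg hT, ← norm_smul, fubini]
  exact norm_setIntegral_le_of_norm_le_const hd hK

end Averaging

section CoordinateRotation

variable {ι : Type*} [Fintype ι] {j k : ι}

theorem norm_eq_norm_of_sq_add_sq_eq (hjk : j ≠ k) {x y : EuclideanSpace ℝ ι}
    (h : x j ^ 2 + x k ^ 2 = y j ^ 2 + y k ^ 2) (hrest : ∀ i, i ≠ j → i ≠ k → x i = y i) :
    ‖x‖ = ‖y‖ := by
  classical
  simp only [EuclideanSpace.norm_eq, Real.norm_eq_abs, sq_abs]
  rw [← Finset.sum_add_sum_compl {j, k}, ← Finset.sum_add_sum_compl {j, k} fun i ↦ y i ^ 2,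
    Finset.sum_pair hjk, Finset.sum_pair hjk, h]
  congr 2
  refine Finset.sum_congr rfl fun i hi ↦ ?_
  simp only [Finset.mem_compl, Finset.mem_insert, Finset.mem_singleton, not_or] at hi
  rw [hrest i hi.1 hi.2]

variable [DecidableEq ι]

/-- The rotation by the angle `θ` in the plane of the coordinates `j` and `k`. -/
noncomputable def coordRotation (hjk : j ≠ k) (θ : ℝ) :
    EuclideanSpace ℝ ι ≃ₗᵢ[ℝ] EuclideanSpace ℝ ι :=
  LinearIsometry.toLinearIsometryEquiv
    { toFun y := WithLp.toLp 2 fun i ↦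
        if i = j then Real.cos θ * y j - Real.sin θ * y k
        else if i = k then Real.sin θ * y j + Real.cos θ * y k else y i
      map_add' x y := by
        ext i
        simp only [PiLp.add_apply]
        split_ifs <;> ring
      map_smul' c y := by
        ext i
        simp only [PiLp.smul_apply, smul_eq_mul, RingHom.id_apply]
        split_ifs <;> ring
      norm_map' y := by
        refine norm_eq_norm_of_sq_add_sq_eq hjk ?_ fun i hij hik ↦ by simp [hij, hik]
        simp only [LinearMap.coe_mk, AddHom.coe_mk, if_true, hjk.symm, if_false]
        linear_combination (y j ^ 2 + y k ^ 2) * Real.sin_sq_add_cos_sq θ }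
    rfl

variable (hjk : j ≠ k) (θ : ℝ) (y : EuclideanSpace ℝ ι)

theorem coordRotation_apply (i : ι) :
    coordRotation hjk θ y i = if i = j then Real.cos θ * y j - Real.sin θ * y k
      else if i = k then Real.sin θ * y j + Real.cos θ * y k else y i :=
  rfl

theorem coordRotation_apply_of_ne {i : ι} (hij : i ≠ j) (hik : i ≠ k) :
    coordRotation hjk θ y i = y i := by
  rw [coordRotation_apply, if_neg hij, if_neg hik]

theorem continuous_coordRotation :
    Continuous fun z : ℝ × EuclideanSpace ℝ ι ↦ coordRotation hjk z.1 z.2 := by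
  refine (PiLp.continuous_toLp 2 _).comp (continuous_pi fun i ↦ ?_)
  split_ifs <;> fun_prop

theorem coordRotation_apply_left {y : EuclideanSpace ℝ ι} {r θ₀ : ℝ}
    (hj : y j = r * Real.cos θ₀) (hk : y k = r * Real.sin θ₀) :
    coordRotation hjk θ y j = r * Real.cos (θ + θ₀) := by
  rw [coordRotation_apply, if_pos rfl, hj, hk, Real.cos_add]
  ring

theorem coordRotation_apply_right {y : EuclideanSpace ℝ ι} {r θ₀ : ℝ}
    (hj : y j = r * Real.cos θ₀) (hk : y k = r * Real.sin θ₀) :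
    coordRotation hjk θ y k = r * Real.sin (θ + θ₀) := by
  rw [coordRotation_apply, if_neg hjk.symm, if_pos rfl, hj, hk, Real.sin_add]
  ring

end CoordinateRotation

section MonomialPhase

variable {ι : Type*} [Fintype ι] {β : ι → ℕ} {lam : EuclideanSpace ℝ ι}

/-- The phase `λ₁ y₁ ^ β₁ + ⋯ + λₙ yₙ ^ βₙ` of the oscillatory integral. -/
noncomputable def monomialPhase (β : ι → ℕ) (lam y : EuclideanSpace ℝ ι) : ℝ :=
  ∑ i, lam i * y i ^ β i

theorem continuous_monomialPhase : Continuous (monomialPhase β lam) := by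
  unfold monomialPhase
  fun_prop

theorem exists_polar_coordinates (a b : ℝ) :
    ∃ r ≥ 0, ∃ θ : ℝ, a = r * Real.cos θ ∧ b = r * Real.sin θ :=
  ⟨‖(⟨a, b⟩ : ℂ)‖, norm_nonneg _, Complex.arg ⟨a, b⟩,
    (Complex.norm_mul_cos_arg ⟨a, b⟩).symm, (Complex.norm_mul_sin_arg ⟨a, b⟩).symm⟩

theorem sq_mul_mul_pow_rpow_le {p N : ℕ} (hN : N ≠ 0) (hp : p ≤ N) {a r : ℝ} (ha : 0 ≤ a)
    (hr : 0 < r) (hr1 : r ≤ 1) :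
    r ^ 2 * (a * r ^ p) ^ (-(1 / (N : ℝ))) ≤ a ^ (-(1 / (N : ℝ))) := by
  have loss : (r ^ p) ^ (-(1 / (N : ℝ))) ≤ r⁻¹ :=
    calc (r ^ p) ^ (-(1 / (N : ℝ))) ≤ (r ^ N) ^ (-(1 / (N : ℝ))) :=
          Real.rpow_le_rpow_of_nonpos (by positivity) (pow_le_pow_of_le_one hr.le hr1 hp) (by simp)
      _ = r⁻¹ := by
          rw [Real.rpow_neg (by positivity), one_div, Real.pow_rpow_inv_natCast hr.le hN]
  calc r ^ 2 * (a * r ^ p) ^ (-(1 / (N : ℝ)))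
      = a ^ (-(1 / (N : ℝ))) * (r ^ 2 * (r ^ p) ^ (-(1 / (N : ℝ)))) := by
        rw [Real.mul_rpow ha (by positivity)]
        ring
    _ ≤ a ^ (-(1 / (N : ℝ))) * (r ^ 2 * r⁻¹) := by gcongr
    _ ≤ a ^ (-(1 / (N : ℝ))) :=
        mul_le_of_le_one_right (by positivity) (by field_simp; exact hr1)

theorem sq_add_sq_le_norm_sq {j k : ι} (hjk : j ≠ k) (y : EuclideanSpace ℝ ι) :
    y j ^ 2 + y k ^ 2 ≤ ‖y‖ ^ 2 := by
  classical
  rw [EuclideanSpace.real_norm_sq_eq, ← Finset.sum_pair hjk (f := fun i ↦ y i ^ 2)]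
  exact Finset.sum_le_univ_sum_of_nonneg fun i ↦ sq_nonneg (y i)

theorem exists_norm_le_sqrt_card_mul_abs [Nonempty ι] (y : EuclideanSpace ℝ ι) :
    ∃ j, ‖y‖ ≤ √(Fintype.card ι) * |y j| := by
  obtain ⟨j, hj⟩ := Finite.exists_max fun i ↦ |y i|
  refine ⟨j, (sq_le_sq₀ (norm_nonneg _) (by positivity)).mp ?_⟩
  calc ‖y‖ ^ 2 = ∑ i, |y i| ^ 2 := by simp only [EuclideanSpace.real_norm_sq_eq, sq_abs]
    _ ≤ ∑ _i : ι, |y j| ^ 2 :=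
        Finset.sum_le_sum fun i _ ↦ pow_le_pow_left₀ (abs_nonneg _) (hj i) 2
    _ = (√(Fintype.card ι) * |y j|) ^ 2 := by
        rw [mul_pow, Real.sq_sqrt (Nat.cast_nonneg _), Finset.sum_const, Finset.card_univ,
          nsmul_eq_mul]

variable {j k : ι}

theorem exists_monomialPhase_coordRotation_eq [DecidableEq ι] (hjk : j ≠ k)
    (β : ι → ℕ) (lam : EuclideanSpace ℝ ι) {y : EuclideanSpace ℝ ι} {r θ₀ : ℝ}
    (hj : y j = r * Real.cos θ₀) (hk : y k = r * Real.sin θ₀) :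
    ∃ A, ∀ θ, monomialPhase β lam (coordRotation hjk θ y) =
      A + (lam j * r ^ β j * Real.cos (θ + θ₀) ^ β j +
        lam k * r ^ β k * Real.sin (θ + θ₀) ^ β k) := by
  refine ⟨∑ i ∈ {j, k}ᶜ, lam i * y i ^ β i, fun θ ↦ ?_⟩
  rw [monomialPhase, ← Finset.sum_compl_add_sum {j, k}, Finset.sum_pair hjk,
    coordRotation_apply_left hjk θ hj hk, coordRotation_apply_right hjk θ hj hk]
  congr 1
  · refine Finset.sum_congr rfl fun i hi ↦ ?_
    simp only [Finset.mem_compl, Finset.mem_insert, Finset.mem_singleton, not_or] at hi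
    rw [coordRotation_apply_of_ne hjk θ y hi.1 hi.2]
  · ring

/-- The amplitude of the piece of the integral that is averaged over rotations of the
`(j, k)`-plane. Its homogeneity of degree two makes up for the shrinking of the coefficient of
the phase on small circles in that plane. -/
def planeWeight (κ : ℝ) (j k : ι) (y : EuclideanSpace ℝ ι) : ℝ :=
  κ * y j ^ 2 + y k ^ 2

theorem exists_norm_integral_coordRotation_eq [DecidableEq ι] (hjk : j ≠ k) (κ : ℝ) (β : ι → ℕ)
    (lam y : EuclideanSpace ℝ ι) (hy : ‖y‖ ≤ 1) :
    ∃ r, 0 ≤ r ∧ r ≤ 1 ∧ ‖∫ θ in 0..2 * Real.pi, planeWeight κ j k (coordRotation hjk θ y) •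
        Complex.exp (Complex.I * (monomialPhase β lam (coordRotation hjk θ y) : ℝ))‖ =
      r ^ 2 * ‖∫ θ in 0..2 * Real.pi, (κ * Real.cos θ ^ 2 + Real.sin θ ^ 2) •
        Complex.exp (Complex.I * (lam j * r ^ β j * Real.cos θ ^ β j +
          lam k * r ^ β k * Real.sin θ ^ β k : ℝ))‖ := by
  obtain ⟨r, hr, θ₀, hj, hk⟩ := exists_polar_coordinates (y j) (y k)
  have hr1 : r ≤ 1 := by
    refine (sq_le_one_iff₀ hr).mp ?_
    calc r ^ 2 = y j ^ 2 + y k ^ 2 := by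
          rw [hj, hk]
          linear_combination -r ^ 2 * Real.sin_sq_add_cos_sq θ₀
      _ ≤ ‖y‖ ^ 2 := sq_add_sq_le_norm_sq hjk y
      _ ≤ 1 := (sq_le_one_iff₀ (norm_nonneg y)).mpr hy
  obtain ⟨A, hA⟩ := exists_monomialPhase_coordRotation_eq hjk β lam hj hk
  refine ⟨r, hr, hr1, ?_⟩
  set g : ℝ → ℂ := fun θ ↦ (κ * Real.cos θ ^ 2 + Real.sin θ ^ 2) • Complex.exp (Complex.I *
    (lam j * r ^ β j * Real.cos θ ^ β j + lam k * r ^ β k * Real.sin θ ^ β k : ℝ)) with hg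
  have integrand_eq (θ : ℝ) : planeWeight κ j k (coordRotation hjk θ y) •
      Complex.exp (Complex.I * (monomialPhase β lam (coordRotation hjk θ y) : ℝ)) =
      r ^ 2 • (Complex.exp (Complex.I * A) * g (θ + θ₀)) := by
    rw [hA, planeWeight, coordRotation_apply_left hjk θ hj hk,
      coordRotation_apply_right hjk θ hj hk, Complex.ofReal_add A, mul_add, Complex.exp_add]
    simp only [hg, Complex.real_smul, Complex.ofReal_add, Complex.ofReal_mul, Complex.ofReal_pow]
    ring
  have g_periodic : Function.Periodic g (2 * Real.pi) := fun θ ↦ by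
    simp only [hg, Real.cos_add_two_pi, Real.sin_add_two_pi]
  have shift : ∫ θ in 0..2 * Real.pi, g (θ + θ₀) = ∫ θ in 0..2 * Real.pi, g θ := by
    rw [intervalIntegral.integral_comp_add_right, zero_add, add_comm,
      g_periodic.intervalIntegral_add_eq θ₀ 0, zero_add]
  simp only [integrand_eq, intervalIntegral.integral_smul, intervalIntegral.integral_const_mul]
  rw [shift, norm_smul, norm_mul, Complex.norm_exp_I_mul_ofReal, one_mul,
    Real.norm_of_nonneg (sq_nonneg r)]

theorem exists_norm_integral_coordRotation_le [DecidableEq ι] (hjk : j ≠ k) (κ : ℝ) {N : ℕ}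
    (hβj : 3 ≤ β j) (hβk : 3 ≤ β k) (hjN : β j ≤ N) (hkN : β k ≤ N) :
    ∃ C ≥ 0, ∀ lam y : EuclideanSpace ℝ ι, lam j ≠ 0 → ‖y‖ ≤ 1 →
      ‖∫ θ in 0..2 * Real.pi, planeWeight κ j k (coordRotation hjk θ y) •
        Complex.exp (Complex.I * (monomialPhase β lam (coordRotation hjk θ y) : ℝ))‖ ≤
        C * |lam j| ^ (-(1 / (N : ℝ))) := by
  obtain ⟨C, hC, hdecay⟩ := exists_norm_integral_smul_exp_cos_pow_add_sin_pow_le hβj hβk hjN hkN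
    (ψ := fun θ ↦ κ * Real.cos θ ^ 2 + Real.sin θ ^ 2) (by fun_prop)
  refine ⟨C, hC, fun lam y hlam hy ↦ ?_⟩
  obtain ⟨r, hr, hr1, heq⟩ := exists_norm_integral_coordRotation_eq hjk κ β lam y hy
  rw [heq]
  rcases hr.eq_or_lt with rfl | hr0
  · rw [zero_pow two_ne_zero, zero_mul]
    positivity
  calc _ ≤ r ^ 2 * (C * |lam j * r ^ β j| ^ (-(1 / (N : ℝ)))) := by
        gcongr
        exact hdecay _ _ (mul_ne_zero hlam (pow_ne_zero _ hr0.ne'))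
    _ = C * (r ^ 2 * (|lam j| * r ^ β j) ^ (-(1 / (N : ℝ)))) := by
        rw [abs_mul, abs_of_pos (pow_pos hr0 _)]
        ring
    _ ≤ C * |lam j| ^ (-(1 / (N : ℝ))) := by
        gcongr
        exact sq_mul_mul_pow_rpow_le (by lia) hjN (abs_nonneg _) hr0 hr1

theorem exists_norm_setIntegral_planeWeight_le (hjk : j ≠ k) (κ : ℝ) {N : ℕ} (hβj : 3 ≤ β j)
    (hβk : 3 ≤ β k) (hjN : β j ≤ N) (hkN : β k ≤ N) {d : ℝ}
    (hd : μH[d] (Metric.sphere (0 : EuclideanSpace ℝ ι) 1) < ∞) :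
    ∃ C ≥ 0, ∀ lam : EuclideanSpace ℝ ι, lam j ≠ 0 →
      ‖∫ y in Metric.sphere (0 : EuclideanSpace ℝ ι) 1, planeWeight κ j k y •
        Complex.exp (Complex.I * (monomialPhase β lam y : ℝ)) ∂μH[d]‖ ≤
        C * |lam j| ^ (-(1 / (N : ℝ))) := by
  classical
  obtain ⟨C, hC, hdecay⟩ := exists_norm_integral_coordRotation_le hjk κ hβj hβk hjN hkN
  refine ⟨C * μH[d].real (Metric.sphere (0 : EuclideanSpace ℝ ι) 1) / (2 * Real.pi),
    by positivity, fun lam hlam ↦ ?_⟩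
  have hcont : Continuous fun y : EuclideanSpace ℝ ι ↦ planeWeight κ j k y •
      Complex.exp (Complex.I * (monomialPhase β lam y : ℝ)) := by
    have := continuous_monomialPhase (β := β) (lam := lam)
    unfold planeWeight
    fun_prop
  have average := mul_norm_setIntegral_sphere_le (continuous_coordRotation hjk) hd hcont
    Real.two_pi_pos.le fun y hy ↦ hdecay lam y hlam (mem_sphere_zero_iff_norm.mp hy).le
  rw [div_mul_eq_mul_div, le_div_iff₀' Real.two_pi_pos]
  exact average.trans_eq (by ring)

theorem sum_planeWeight_eq_one [DecidableEq ι] [Nontrivial ι] (j : ι) {y : EuclideanSpace ℝ ι}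
    (hy : ‖y‖ = 1) :
    ∑ k ∈ Finset.univ.erase j, planeWeight (1 / (Finset.univ.erase j).card) j k y = 1 := by
  have hcard : ((Finset.univ.erase j).card : ℝ) ≠ 0 := by
    obtain ⟨k, hk⟩ := exists_ne j
    exact mod_cast Finset.card_ne_zero_of_mem (Finset.mem_erase.mpr ⟨hk, Finset.mem_univ k⟩)
  simp only [planeWeight]
  rw [Finset.sum_add_distrib, Finset.sum_const, nsmul_eq_mul, ← mul_assoc,
    mul_one_div_cancel hcard, one_mul, Finset.add_sum_erase _ (fun k ↦ y k ^ 2) (Finset.mem_univ j),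
    ← EuclideanSpace.real_norm_sq_eq, hy, one_pow]

variable {d : ℝ}

theorem setIntegral_sphere_eq_sum_planeWeight [DecidableEq ι] [Nontrivial ι] (j : ι)
    (hd : μH[d] (Metric.sphere (0 : EuclideanSpace ℝ ι) 1) < ∞) {f : EuclideanSpace ℝ ι → ℂ}
    (hf : Continuous f) :
    ∫ y in Metric.sphere (0 : EuclideanSpace ℝ ι) 1, f y ∂μH[d] =
      ∑ k ∈ Finset.univ.erase j, ∫ y in Metric.sphere (0 : EuclideanSpace ℝ ι) 1,
        planeWeight (1 / (Finset.univ.erase j).card) j k y • f y ∂μH[d] := by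
  have integrable (k : ι) : IntegrableOn
      (fun y ↦ planeWeight (1 / (Finset.univ.erase j).card) j k y • f y)
      (Metric.sphere (0 : EuclideanSpace ℝ ι) 1) μH[d] := by
    refine ContinuousOn.integrableOn_of_subset_isCompact (Continuous.continuousOn ?_)
      (isCompact_sphere 0 1) Metric.isClosed_sphere.measurableSet subset_rfl hd.ne
    unfold planeWeight
    fun_prop
  rw [← integral_finsetSum _ fun k _ ↦ integrable k]
  refine setIntegral_congr_fun Metric.isClosed_sphere.measurableSet fun y hy ↦ ?_
  simp only [← Finset.sum_smul]
  rw [sum_planeWeight_eq_one j (mem_sphere_zero_iff_norm.mp hy), one_smul]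

variable [Nontrivial ι] {N : ℕ}

theorem exists_norm_setIntegral_sphere_le_abs_apply (hβ : ∀ i, 3 ≤ β i) (hN : ∀ i, β i ≤ N)
    (hd : μH[d] (Metric.sphere (0 : EuclideanSpace ℝ ι) 1) < ∞) (j : ι) :
    ∃ C ≥ 0, ∀ lam : EuclideanSpace ℝ ι, lam j ≠ 0 →
      ‖∫ y in Metric.sphere (0 : EuclideanSpace ℝ ι) 1,
        Complex.exp (Complex.I * (monomialPhase β lam y : ℝ)) ∂μH[d]‖ ≤
        C * |lam j| ^ (-(1 / (N : ℝ))) := by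
  classical
  choose! C hC hdecay using fun (k : ι) (hjk : j ≠ k) ↦ exists_norm_setIntegral_planeWeight_le hjk
    (1 / (Finset.univ.erase j).card) (hβ j) (hβ k) (hN j) (hN k) hd
  refine ⟨∑ k ∈ Finset.univ.erase j, C k,
    Finset.sum_nonneg fun k hk ↦ hC k (Finset.ne_of_mem_erase hk).symm, fun lam hlam ↦ ?_⟩
  have hcont : Continuous fun y : EuclideanSpace ℝ ι ↦
      Complex.exp (Complex.I * (monomialPhase β lam y : ℝ)) := by
    have := continuous_monomialPhase (β := β) (lam := lam)
    fun_prop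
  rw [setIntegral_sphere_eq_sum_planeWeight j hd hcont, Finset.sum_mul]
  exact norm_sum_le_of_le _ fun k hk ↦ hdecay k (Finset.ne_of_mem_erase hk).symm lam hlam

theorem exists_norm_setIntegral_sphere_le_norm (hβ : ∀ i, 3 ≤ β i) (hN : ∀ i, β i ≤ N)
    (hd : μH[d] (Metric.sphere (0 : EuclideanSpace ℝ ι) 1) < ∞) :
    ∃ C : ℝ, ∀ lam : EuclideanSpace ℝ ι, lam ≠ 0 →
      ‖∫ y in Metric.sphere (0 : EuclideanSpace ℝ ι) 1,
        Complex.exp (Complex.I * (monomialPhase β lam y : ℝ)) ∂μH[d]‖ ≤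
        C * ‖lam‖ ^ (-(1 / (N : ℝ))) := by
  choose C hC hdecay using exists_norm_setIntegral_sphere_le_abs_apply hβ hN hd
  refine ⟨(∑ j, C j) * (√(Fintype.card ι))⁻¹ ^ (-(1 / (N : ℝ))), fun lam hlam ↦ ?_⟩
  obtain ⟨j, hj⟩ := exists_norm_le_sqrt_card_mul_abs lam
  have hlamj : lam j ≠ 0 := by
    intro h
    rw [h, abs_zero, mul_zero] at hj
    exact hlam (norm_le_zero_iff.mp hj)
  have hcard : 0 < √(Fintype.card ι : ℝ) := by
    have := Fintype.card_pos (α := ι)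
    positivity
  have hCj : C j ≤ ∑ j, C j := Finset.single_le_sum (fun i _ ↦ hC i) (Finset.mem_univ j)
  calc _ ≤ C j * |lam j| ^ (-(1 / (N : ℝ))) := hdecay j lam hlamj
    _ ≤ (∑ j, C j) * ((√(Fintype.card ι))⁻¹ * ‖lam‖) ^ (-(1 / (N : ℝ))) := by
        refine mul_le_mul hCj ?_ (by positivity) ((hC j).trans hCj)
        exact Real.rpow_le_rpow_of_nonpos (mul_pos (inv_pos.mpr hcard) (norm_pos_iff.mpr hlam))
          ((inv_mul_le_iff₀ hcard).mpr hj) (by simp)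
    _ = _ := by rw [Real.mul_rpow (by positivity) (by positivity), mul_assoc]

end MonomialPhase

/-- Decay of the oscillatory integral
`I(λ) = ∫_{𝕊^{n-1}} e^{i(λ₁ y₁^{β₁} + ⋯ + λₙ yₙ^{βₙ})} dσ(y)`:
`|I(λ)| ≤ C |λ|^{-1/β_max}` for `λ ≠ 0`. -/
theorem sphere_oscillatory_decay (n : ℕ) (hn : 2 ≤ n) (β : Fin n → ℕ)
    (hβ : ∀ j, 3 ≤ β j) (βmax : ℕ) (hβmax : βmax = Finset.univ.sup β) :
    ∃ C : ℝ, ∀ lam : EuclideanSpace ℝ (Fin n), lam ≠ 0 →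
      ‖∫ y in Metric.sphere (0 : EuclideanSpace ℝ (Fin n)) 1,
          Complex.exp (Complex.I * Complex.ofReal (∑ j, lam j * (y j) ^ (β j)))
            ∂(μH[(n : ℝ) - 1])‖
        ≤ C * ‖lam‖ ^ (-(1 / (βmax : ℝ))) := by
  obtain ⟨m, rfl⟩ : ∃ m, n = m + 1 := Nat.exists_eq_add_of_le' (by lia)
  have : Nontrivial (Fin (m + 1)) := Fin.nontrivial_iff_two_le.mpr hn
  have hle (j : Fin (m + 1)) : β j ≤ βmax := hβmax ▸ Finset.le_sup (Finset.mem_univ j)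
  have hfinite : μH[((m + 1 : ℕ) : ℝ) - 1]
      (Metric.sphere (0 : EuclideanSpace ℝ (Fin (m + 1))) 1) < ∞ := by
    simpa using hausdorffMeasure_sphere_lt_top m
  exact exists_norm_setIntegral_sphere_le_norm hβ hle hfinite
end

section
/- Let $n \geq 2$ and let $\beta_1, \dots, \beta_n$ be integers with $\beta_j \geq 3$ for all $j$, and suppose $\beta_n = \beta_{\max} = \max\{\beta_1,\dots,\beta_n\}$. For $t > 0$ let $\tilde{\lambda}(t) = (0,\dots,0,t) \in \mathbb{R}^n$ and $I(\tilde{\lambda}(t)) = \int_{\mathbb{S}^{n-1}} e^{i t\, y_n^{\beta_n}} d\sigma(y)$. Then there is a constant $a_0 > 0$ such that $|I(\tilde{\lambda}(t))| = a_0\, t^{-1/\beta_{\max}} + o\big(t^{-1/\beta_{\max}}\big)$ as $t \to \infty$; equivalently, $\lim_{t\to\infty} t^{1/\beta_{\max}} |I(\tilde{\lambda}(t))| = a_0 > 0$. In particular, the decay estimate $|I(\lambda)| \lesssim |\lambda|^{-1/\beta_{\max}}$ is optimal. -/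
open MeasureTheory Filter
open scoped ENNReal Topology

/-!
Pushing the surface measure of the unit sphere forward along `y ↦ ⟪v, y⟫ = sin θ`, with `θ` the
latitude, gives a multiple of `cos θ ^ (n - 2) dθ` on `(-π / 2, π / 2)`, so the surface integral is
a multiple of the one-dimensional integral of `cos θ ^ (n - 2) exp (i t sin θ ^ b)`.
The equator `θ = 0` contributes, after rescaling by `t ^ (1 / b)`, the Fresnel integrals
`∫₀^∞ exp (± i s ^ b) ds` of the two hemispheres; their real parts are equal, and two integrations
by parts show that they are positive, so the contributions cannot cancel. The poles are
nondegenerate critical points of the phase and contribute `O(t ^ (-1 / 2)) = o(t ^ (-1 / b))`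
since `b ≥ 3`.

The surface measure is the Hausdorff measure. It is compared with the measure of polar coordinates
by Christensen's theorem: both are invariant under isometries, and two finite measures giving all
balls of equal radius the same mass are proportional. That the Hausdorff measure of the sphere is
finite and positive follows from stereographic and orthogonal projection.
-/

section VanDerCorput

variable {a b : ℝ}

lemma norm_integral_smul_deriv_le {V : Type*} [NormedAddCommGroup V] [NormedSpace ℝ V]
    [CompleteSpace V] {w w' : ℝ → ℝ} {F f : ℝ → V} {B : ℝ} (hab : a ≤ b)
    (hw : ∀ x ∈ Set.Icc a b, HasDerivAt w (w' x) x) (hw' : ContinuousOn w' (Set.Icc a b))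
    (hF : ∀ x ∈ Set.Icc a b, HasDerivAt F (f x) x) (hf : ContinuousOn f (Set.Icc a b))
    (hB : ∀ x ∈ Set.Icc a b, ‖F x‖ ≤ B) :
    ‖∫ x in a..b, w x • f x‖ ≤ B * (|w a| + |w b| + ∫ x in a..b, |w' x|) := by
  rw [← Set.uIcc_of_le hab] at hw hw' hF hf
  rw [intervalIntegral.integral_smul_deriv_eq_deriv_smul hw hF hw'.intervalIntegrable
    hf.intervalIntegrable]
  have boundary_left : ‖w a • F a‖ ≤ B * |w a| := by
    rw [norm_smul, mul_comm, Real.norm_eq_abs]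
    gcongr
    exact hB a (Set.left_mem_Icc.2 hab)
  have boundary_right : ‖w b • F b‖ ≤ B * |w b| := by
    rw [norm_smul, mul_comm, Real.norm_eq_abs]
    gcongr
    exact hB b (Set.right_mem_Icc.2 hab)
  have bulk : ‖∫ x in a..b, w' x • F x‖ ≤ B * ∫ x in a..b, |w' x| := by
    rw [← intervalIntegral.integral_const_mul]
    refine intervalIntegral.norm_integral_le_of_norm_le hab (ae_of_all _ fun x hx => ?_)
      (hw'.abs.const_mul B).intervalIntegrable
    rw [norm_smul, mul_comm, Real.norm_eq_abs]
    gcongr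
    exact hB x (Set.Ioc_subset_Icc_self hx)
  calc ‖w b • F b - w a • F a - ∫ x in a..b, w' x • F x‖
      ≤ ‖w b • F b‖ + ‖w a • F a‖ + ‖∫ x in a..b, w' x • F x‖ :=
        (norm_sub_le _ _).trans (add_le_add_left (norm_sub_le _ _) _)
    _ ≤ B * |w b| + B * |w a| + B * ∫ x in a..b, |w' x| := by gcongr
    _ = _ := by ring

lemma norm_integral_smul_deriv_le_of_deriv_nonpos {V : Type*} [NormedAddCommGroup V]
    [NormedSpace ℝ V] [CompleteSpace V] {w w' : ℝ → ℝ} {F f : ℝ → V} {B : ℝ} (hab : a ≤ b)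
    (hw : ∀ x ∈ Set.Icc a b, HasDerivAt w (w' x) x) (hw' : ContinuousOn w' (Set.Icc a b))
    (hF : ∀ x ∈ Set.Icc a b, HasDerivAt F (f x) x) (hf : ContinuousOn f (Set.Icc a b))
    (hB : ∀ x ∈ Set.Icc a b, ‖F x‖ ≤ B) (hanti : ∀ x ∈ Set.Icc a b, w' x ≤ 0) (hwb : 0 ≤ w b) :
    ‖∫ x in a..b, w x • f x‖ ≤ 2 * B * w a := by
  have variation : ∫ x in a..b, |w' x| = w a - w b := by
    rw [← Set.uIcc_of_le hab] at hw hw' hanti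
    rw [← neg_sub, ← intervalIntegral.integral_eq_sub_of_hasDerivAt hw hw'.intervalIntegrable,
      ← intervalIntegral.integral_neg]
    exact intervalIntegral.integral_congr fun x hx => abs_of_nonpos (hanti x hx)
  have variation_nonneg : 0 ≤ ∫ x in a..b, |w' x| :=
    intervalIntegral.integral_nonneg hab fun x _ => abs_nonneg _
  refine (norm_integral_smul_deriv_le hab hw hw' hF hf hB).trans_eq ?_
  rw [variation, abs_of_nonneg hwb, abs_of_nonneg (by linarith)]
  ring

variable {φ φ' φ'' : ℝ → ℝ}

lemma norm_integral_cexp_le_of_deriv_pos (hab : a ≤ b)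
    (hφ : ∀ x ∈ Set.Icc a b, HasDerivAt φ (φ' x) x)
    (hφ' : ∀ x ∈ Set.Icc a b, HasDerivAt φ' (φ'' x) x) (hφ'' : ContinuousOn φ'' (Set.Icc a b))
    (hpos : 0 < φ' a) (hconv : ∀ x ∈ Set.Icc a b, 0 ≤ φ'' x) :
    ‖∫ x in a..b, Complex.exp (Complex.I * φ x)‖ ≤ 2 / φ' a := by
  have hφ'_cont : ContinuousOn φ' (Set.Icc a b) := fun x hx =>
    (hφ' x hx).continuousAt.continuousWithinAt
  have hφ_cont : ContinuousOn φ (Set.Icc a b) := fun x hx =>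
    (hφ x hx).continuousAt.continuousWithinAt
  have hmono : MonotoneOn φ' (Set.Icc a b) :=
    monotoneOn_of_hasDerivWithinAt_nonneg (convex_Icc a b) hφ'_cont
      (fun x hx => (hφ' x (interior_subset hx)).hasDerivWithinAt)
      fun x hx => hconv x (interior_subset hx)
  have hφ'_pos : ∀ x ∈ Set.Icc a b, 0 < φ' x := fun x hx =>
    hpos.trans_le (hmono (Set.left_mem_Icc.2 hab) hx hx.1)
  have hw : ∀ x ∈ Set.Icc a b, HasDerivAt (fun x => (φ' x)⁻¹) (-φ'' x / φ' x ^ 2) x :=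
    fun x hx => (hφ' x hx).fun_inv (hφ'_pos x hx).ne'
  have hw' : ContinuousOn (fun x => -φ'' x / φ' x ^ 2) (Set.Icc a b) :=
    hφ''.neg.div (hφ'_cont.pow 2) fun x hx => (pow_pos (hφ'_pos x hx) 2).ne'
  have hF : ∀ x ∈ Set.Icc a b, HasDerivAt (fun x => -Complex.I * Complex.exp (Complex.I * φ x))
      (φ' x * Complex.exp (Complex.I * φ x)) x := fun x hx => by
    refine (((hφ x hx).ofReal_comp.const_mul Complex.I).cexp.const_mul (-Complex.I)).congr_deriv ?_
    linear_combination -(φ' x * Complex.exp (Complex.I * φ x)) * Complex.I_mul_I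
  have key := norm_integral_smul_deriv_le_of_deriv_nonpos hab hw hw' hF (by fun_prop) (B := 1)
    (fun x _ => by
      rw [norm_mul, norm_neg, Complex.norm_I, Complex.norm_exp_I_mul_ofReal, one_mul])
    (fun x hx => div_nonpos_of_nonpos_of_nonneg (neg_nonpos.2 (hconv x hx)) (sq_nonneg _))
    (inv_pos.2 (hφ'_pos b (Set.right_mem_Icc.2 hab))).le
  calc ‖∫ x in a..b, Complex.exp (Complex.I * φ x)‖
      = ‖∫ x in a..b, (φ' x)⁻¹ • ((φ' x : ℂ) * Complex.exp (Complex.I * φ x))‖ := by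
        congr 1
        refine intervalIntegral.integral_congr fun x hx => ?_
        have : (φ' x : ℂ) ≠ 0 := by
          exact_mod_cast (hφ'_pos x (Set.uIcc_of_le hab ▸ hx)).ne'
        simp [this]
    _ ≤ 2 / φ' a := key.trans_eq (by ring)

lemma norm_integral_cexp_le_sub (φ : ℝ → ℝ) (hab : a ≤ b) :
    ‖∫ x in a..b, Complex.exp (Complex.I * φ x)‖ ≤ b - a := by
  have := intervalIntegral.norm_integral_le_of_norm_le_const (a := a) (b := b) (C := 1)
    (f := fun x => Complex.exp (Complex.I * φ x))
    fun x _ => (Complex.norm_exp_I_mul_ofReal _).le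
  rwa [one_mul, abs_of_nonneg (sub_nonneg.2 hab)] at this

lemma norm_integral_cexp_le_of_le_deriv_deriv {l : ℝ} (hab : a ≤ b) (hl : 0 < l)
    (hφ : ∀ x ∈ Set.Icc a b, HasDerivAt φ (φ' x) x)
    (hφ' : ∀ x ∈ Set.Icc a b, HasDerivAt φ' (φ'' x) x) (hφ'' : ContinuousOn φ'' (Set.Icc a b))
    (hnonneg : 0 ≤ φ' a) (hconv : ∀ x ∈ Set.Icc a b, l ≤ φ'' x) :
    ‖∫ x in a..b, Complex.exp (Complex.I * φ x)‖ ≤ 3 / √l := by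
  have hsqrt : 0 < √l := Real.sqrt_pos.2 hl
  set δ := 1 / √l with hδ
  have hδ_pos : 0 < δ := one_div_pos.2 hsqrt
  have three_div : 3 / √l = δ + 2 * δ := by rw [hδ]; ring
  rcases le_total b (a + δ) with hb | hb
  · linarith [norm_integral_cexp_le_sub φ hab]
  have hsub : Set.Icc (a + δ) b ⊆ Set.Icc a b := Set.Icc_subset_Icc_left (by linarith)
  have hmid : a + δ ∈ Set.Icc a b := ⟨by linarith, hb⟩
  have hφ_cont : ContinuousOn φ (Set.Icc a b) := fun x hx =>
    (hφ x hx).continuousAt.continuousWithinAt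
  have deriv_mid : √l ≤ φ' (a + δ) := by
    have growth := Convex.mul_sub_le_image_sub_of_le_deriv (convex_Icc a b) (f := φ')
      (fun x hx => (hφ' x hx).continuousAt.continuousWithinAt)
      (fun x hx => (hφ' x (interior_subset hx)).differentiableAt.differentiableWithinAt)
      (fun x hx => (hφ' x (interior_subset hx)).deriv ▸ hconv x (interior_subset hx))
      a (Set.left_mem_Icc.2 hab) (a + δ) hmid (by linarith)
    have : l * (a + δ - a) = √l := by rw [hδ, add_sub_cancel_left, mul_one_div, Real.div_sqrt]
    linarith
  have near := norm_integral_cexp_le_sub φ (a := a) (b := a + δ) (by linarith)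
  have far := norm_integral_cexp_le_of_deriv_pos hb (fun x hx => hφ x (hsub hx))
    (fun x hx => hφ' x (hsub hx)) (hφ''.mono hsub) (hsqrt.trans_le deriv_mid)
    fun x hx => hl.le.trans (hconv x (hsub hx))
  have h_int : ∀ u ∈ Set.Icc a b, ∀ v ∈ Set.Icc a b,
      IntervalIntegrable (fun x => Complex.exp (Complex.I * φ x)) volume u v := fun u hu v hv =>
    ContinuousOn.intervalIntegrable (by
      have := hφ_cont.mono (Set.uIcc_subset_Icc hu hv)
      fun_prop)
  rw [← intervalIntegral.integral_add_adjacent_intervals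
    (h_int a (Set.left_mem_Icc.2 hab) _ hmid) (h_int _ hmid b (Set.right_mem_Icc.2 hab)), three_div]
  refine (norm_add_le _ _).trans (add_le_add (near.trans_eq (by ring)) (far.trans ?_))
  rw [hδ, mul_one_div]
  gcongr

end VanDerCorput

section FresnelIntegral

variable {b : ℕ}

lemma norm_integral_cexp_pow_le (hb : 2 ≤ b) {x y : ℝ} (hx : 0 < x) (hxy : x ≤ y) :
    ‖∫ s in x..y, Complex.exp (Complex.I * ↑(s ^ b))‖ ≤ 2 / (b * x ^ (b - 1)) :=
  norm_integral_cexp_le_of_deriv_pos (φ := fun s => s ^ b) (φ' := fun s => b * s ^ (b - 1))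
    (φ'' := fun s => b * (↑(b - 1) * s ^ (b - 1 - 1))) hxy (fun s _ => hasDerivAt_pow b s)
    (fun s _ => (hasDerivAt_pow (b - 1) s).const_mul (b : ℝ)) (by fun_prop)
    (by positivity) fun s hs => by
      have := hx.le.trans hs.1
      positivity

lemma exists_tendsto_integral_cexp_pow (hb : 2 ≤ b) :
    ∃ L : ℂ, Tendsto (fun x : ℝ => ∫ s in (0 : ℝ)..x, Complex.exp (Complex.I * ↑(s ^ b)))
      atTop (𝓝 L) := by
  refine cauchySeq_tendsto_of_complete (Metric.cauchySeq_iff'.2 fun ε hε => ?_)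
  have tail : Tendsto (fun x : ℝ => 2 / (b * x ^ (b - 1))) atTop (𝓝 0) :=
    tendsto_const_nhds.div_atTop
      ((tendsto_pow_atTop (by lia)).const_mul_atTop (by positivity))
  obtain ⟨x, hx_tail, hx⟩ := ((tail.eventually_lt_const hε).and (eventually_gt_atTop 0)).exists
  refine ⟨x, fun y hxy => ?_⟩
  have h_int : ∀ u v : ℝ, IntervalIntegrable
      (fun s : ℝ => Complex.exp (Complex.I * ↑(s ^ b))) volume u v := fun u v =>
    Continuous.intervalIntegrable (by fun_prop) u v
  rw [dist_eq_norm, intervalIntegral.integral_interval_sub_left (h_int 0 y) (h_int 0 x)]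
  exact (norm_integral_cexp_pow_le hb hx hxy).trans_lt hx_tail

/-- The boundary terms left by two integrations by parts in `∫ cos (s ^ b) ds`, the second one
using the primitive `1 - cos` of `sin`, which vanishes to second order at `0`.
Division by zero makes its value at `s = 0` the limit `0` as soon as `2 ≤ b`. -/
noncomputable def fresnelBoundary (b : ℕ) (s : ℝ) : ℝ :=
  Real.sin (s ^ b) / (b * s ^ (b - 1)) +
    (b - 1) / b ^ 2 * ((1 - Real.cos (s ^ b)) / s ^ (2 * b - 1))

lemma hasDerivAt_fresnelBoundary (hb : 2 ≤ b) {s : ℝ} (hs : s ≠ 0) :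
    HasDerivAt (fresnelBoundary b)
      (Real.cos (s ^ b) - (b - 1) * (2 * b - 1) / b ^ 2 * ((1 - Real.cos (s ^ b)) / s ^ (2 * b)))
      s := by
  obtain ⟨m, rfl⟩ := Nat.exists_eq_add_of_le' hb
  have hpow (j : ℕ) : HasDerivAt (fun s : ℝ => s ^ (j + 1)) ((j + 1) * s ^ j) s := by
    simpa using hasDerivAt_pow (j + 1) s
  have first := (hpow (m + 1)).sin.div ((hpow m).const_mul ((m : ℝ) + 2)) (by positivity)
  have second := (((hpow (m + 1)).cos.const_sub 1).div (hpow (2 * m + 2)) (by positivity)).const_mul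
    (((m : ℝ) + 1) / (m + 2) ^ 2)
  have hfun : fresnelBoundary (m + 2) = fun s : ℝ =>
      Real.sin (s ^ (m + 1 + 1)) / (((m : ℝ) + 2) * s ^ (m + 1)) +
        ((m : ℝ) + 1) / (m + 2) ^ 2 *
          ((1 - Real.cos (s ^ (m + 1 + 1))) / s ^ (2 * m + 2 + 1)) := by
    funext s
    have hnat : 2 * (m + 2) - 1 = 2 * m + 2 + 1 := by lia
    have hcast : ((m + 2 : ℕ) : ℝ) - 1 = m + 1 := by push_cast; ring
    rw [fresnelBoundary, hnat, hcast]
    push_cast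
    rfl
  rw [hfun]
  refine (first.add second).congr_deriv ?_
  push_cast
  have : (m : ℝ) + 2 ≠ 0 := by positivity
  field_simp
  ring

lemma abs_fresnelBoundary_le (hb : 2 ≤ b) {s : ℝ} (hs : 0 < s) :
    |fresnelBoundary b s| ≤
      |Real.sin (s ^ b)| / s ^ (b - 1) + (1 - Real.cos (s ^ b)) / s ^ (2 * b - 1) := by
  have hb' : (2 : ℝ) ≤ b := by exact_mod_cast hb
  have hcos : 0 ≤ 1 - Real.cos (s ^ b) := sub_nonneg.2 (Real.cos_le_one _)
  have hcoeff : ((b : ℝ) - 1) / b ^ 2 ≤ 1 := (div_le_one (by positivity)).2 (by nlinarith)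
  have hcoeff_nonneg : 0 ≤ ((b : ℝ) - 1) / b ^ 2 := div_nonneg (by linarith) (by positivity)
  refine (abs_add_le _ _).trans (add_le_add ?_ ?_)
  · rw [abs_div, abs_of_pos (by positivity : 0 < (b : ℝ) * s ^ (b - 1))]
    gcongr
    exact le_mul_of_one_le_left (by positivity) (by linarith)
  · rw [abs_of_nonneg (by positivity)]
    exact mul_le_of_le_one_left (by positivity) hcoeff

lemma fresnelBoundary_zero (hb : 2 ≤ b) : fresnelBoundary b 0 = 0 := by
  have : b - 1 ≠ 0 := by lia
  have : 2 * b - 1 ≠ 0 := by lia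
  simp [fresnelBoundary, *]

lemma continuousWithinAt_fresnelBoundary_zero (hb : 2 ≤ b) :
    ContinuousWithinAt (fresnelBoundary b) (Set.Ici 0) 0 := by
  have bound : ∀ s ∈ Set.Ici (0 : ℝ), |fresnelBoundary b s| ≤ 2 * s := fun s hs => by
    rcases (Set.mem_Ici.1 hs).eq_or_lt with rfl | hs
    · simp [fresnelBoundary_zero hb]
    have hpow : s ^ b = s * s ^ (b - 1) := by rw [← pow_succ']; congr; lia
    have hpow_two : (s ^ b) ^ 2 = s * s ^ (2 * b - 1) := by
      rw [← pow_mul, ← pow_succ']; congr; lia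
    have hsin : |Real.sin (s ^ b)| / s ^ (b - 1) ≤ s := by
      rw [div_le_iff₀ (by positivity), ← hpow]
      exact Real.abs_sin_le_abs.trans_eq (abs_of_pos (by positivity))
    have hcos : (1 - Real.cos (s ^ b)) / s ^ (2 * b - 1) ≤ s := by
      rw [div_le_iff₀ (by positivity), ← hpow_two]
      nlinarith [Real.one_sub_sq_div_two_le_cos (x := s ^ b)]
    linarith [abs_fresnelBoundary_le hb hs]
  rw [ContinuousWithinAt, fresnelBoundary_zero hb]
  refine squeeze_zero_norm' (eventually_mem_nhdsWithin.mono bound) ?_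
  exact tendsto_nhdsWithin_of_tendsto_nhds (Continuous.tendsto' (by fun_prop) 0 0 (by simp))

lemma tendsto_fresnelBoundary_atTop (hb : 2 ≤ b) :
    Tendsto (fresnelBoundary b) atTop (𝓝 0) := by
  have bound : ∀ᶠ s : ℝ in atTop, |fresnelBoundary b s| ≤ 3 / s ^ (b - 1) := by
    filter_upwards [eventually_ge_atTop 1] with s hs
    refine (abs_fresnelBoundary_le hb (by linarith)).trans ?_
    calc |Real.sin (s ^ b)| / s ^ (b - 1) + (1 - Real.cos (s ^ b)) / s ^ (2 * b - 1)
        ≤ 1 / s ^ (b - 1) + 2 / s ^ (b - 1) := by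
          gcongr
          · exact Real.abs_sin_le_one _
          · linarith [Real.neg_one_le_cos (s ^ b)]
          · lia
      _ = 3 / s ^ (b - 1) := by ring
  exact squeeze_zero_norm' bound
    (tendsto_const_nhds.div_atTop (tendsto_pow_atTop (by lia)))

lemma hasDerivAt_integral_cos_sub_fresnelBoundary (hb : 2 ≤ b) {s : ℝ} (hs : s ≠ 0) :
    HasDerivAt (fun x => (∫ s in (0 : ℝ)..x, Real.cos (s ^ b)) - fresnelBoundary b x)
      ((b - 1) * (2 * b - 1) / b ^ 2 * ((1 - Real.cos (s ^ b)) / s ^ (2 * b))) s := by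
  have hcos : Continuous fun s : ℝ => Real.cos (s ^ b) := by fun_prop
  exact ((hcos.integral_hasStrictDerivAt 0 s).hasDerivAt.sub
    (hasDerivAt_fresnelBoundary hb hs)).congr_deriv (sub_sub_cancel _ _)

lemma fresnelBoundary_one_lt_integral_cos (hb : 2 ≤ b) :
    fresnelBoundary b 1 < ∫ s in (0 : ℝ)..1, Real.cos (s ^ b) := by
  have hb' : (2 : ℝ) ≤ b := by exact_mod_cast hb
  have hcont : ContinuousOn
      (fun x => (∫ s in (0 : ℝ)..x, Real.cos (s ^ b)) - fresnelBoundary b x) (Set.Icc 0 1) := by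
    intro s hs
    rcases hs.1.eq_or_lt with rfl | hs0
    · have hcos : Continuous fun s : ℝ => Real.cos (s ^ b) := by fun_prop
      exact (hcos.integral_hasStrictDerivAt 0 0).hasDerivAt.continuousAt.continuousWithinAt.sub
        ((continuousWithinAt_fresnelBoundary_zero hb).mono Set.Icc_subset_Ici_self)
    · exact (hasDerivAt_integral_cos_sub_fresnelBoundary hb
        hs0.ne').continuousAt.continuousWithinAt
  have hstrict := strictMonoOn_of_hasDerivWithinAt_pos (convex_Icc 0 1) hcont
    (fun s hs => (hasDerivAt_integral_cos_sub_fresnelBoundary hb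
      (interior_Icc.subset hs).1.ne').hasDerivWithinAt) fun s hs => by
    obtain ⟨hs0, hs1⟩ := interior_Icc.subset hs
    have hcos : Real.cos (s ^ b) < 1 := by
      rw [← Real.cos_zero]
      have : s ^ b < 1 := pow_lt_one₀ hs0.le hs1 (by lia)
      exact Real.cos_lt_cos_of_nonneg_of_le_pi le_rfl (by linarith [Real.pi_gt_three])
        (by positivity)
    have : 0 < 1 - Real.cos (s ^ b) := sub_pos.2 hcos
    have : 0 < ((b : ℝ) - 1) * (2 * b - 1) := mul_pos (by linarith) (by linarith)
    positivity
  simpa [fresnelBoundary_zero hb] using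
    hstrict (Set.left_mem_Icc.2 zero_le_one) (Set.right_mem_Icc.2 zero_le_one) one_pos

lemma re_pos_of_tendsto_integral_cexp_pow (hb : 2 ≤ b) {L : ℂ}
    (hL : Tendsto (fun x : ℝ => ∫ s in (0 : ℝ)..x, Complex.exp (Complex.I * ↑(s ^ b)))
      atTop (𝓝 L)) : 0 < L.re := by
  have hb' : (2 : ℝ) ≤ b := by exact_mod_cast hb
  set D : ℝ → ℝ := fun x => (∫ s in (0 : ℝ)..x, Real.cos (s ^ b)) - fresnelBoundary b x
  have re_integral (x : ℝ) : (∫ s in (0 : ℝ)..x, Complex.exp (Complex.I * ↑(s ^ b))).re =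
      ∫ s in (0 : ℝ)..x, Real.cos (s ^ b) := by
    rw [← Complex.reCLM_apply, ← Complex.reCLM.intervalIntegral_comp_comm
      (Continuous.intervalIntegrable (by fun_prop) 0 x)]
    simp only [mul_comm Complex.I, Complex.reCLM_apply, Complex.exp_ofReal_mul_I_re]
  have hlim : Tendsto D atTop (𝓝 L.re) := by
    have := ((Complex.continuous_re.tendsto L).comp hL).sub (tendsto_fresnelBoundary_atTop hb)
    simpa only [Function.comp_def, re_integral, sub_zero] using this
  have hderiv : ∀ s ∈ Set.Ici (1 : ℝ), HasDerivAt D _ s := fun s hs =>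
    hasDerivAt_integral_cos_sub_fresnelBoundary hb (by linarith [Set.mem_Ici.1 hs])
  have hmono : MonotoneOn D (Set.Ici 1) :=
    monotoneOn_of_hasDerivWithinAt_nonneg (convex_Ici 1)
      (fun s hs => (hderiv s hs).continuousAt.continuousWithinAt)
      (fun s hs => (hderiv s (interior_subset hs)).hasDerivWithinAt) fun s hs => by
      have : 1 ≤ s := interior_subset hs
      have : 0 ≤ 1 - Real.cos (s ^ b) := sub_nonneg.2 (Real.cos_le_one _)
      have : 0 ≤ ((b : ℝ) - 1) * (2 * b - 1) := mul_nonneg (by linarith) (by linarith)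
      positivity
  calc 0 < D 1 := sub_pos.2 (fresnelBoundary_one_lt_integral_cos hb)
    _ ≤ L.re := ge_of_tendsto hlim ((eventually_ge_atTop 1).mono fun x hx =>
        hmono Set.self_mem_Ici hx hx)

end FresnelIntegral

section AbelianLimit

variable {V : Type*} [NormedAddCommGroup V]

lemma exists_norm_le_of_tendsto_atTop {G : ℝ → V} {L : V} (hG : Continuous G)
    (hL : Tendsto G atTop (𝓝 L)) (a : ℝ) : ∃ M, ∀ x, a ≤ x → ‖G x‖ ≤ M := by
  obtain ⟨X, hX⟩ := eventually_atTop.1 (hL.norm.eventually_le_const (lt_add_one ‖L‖))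
  obtain ⟨M, hM⟩ := isCompact_Icc.exists_bound_of_continuousOn (s := Set.Icc a X) hG.continuousOn
  refine ⟨max M (‖L‖ + 1), fun x hx => ?_⟩
  rcases le_total x X with hxX | hXx
  · exact le_max_of_le_left (hM x ⟨hx, hxX⟩)
  · exact le_max_of_le_right (hX x hXx)

variable [NormedSpace ℝ V] {ψ ψ' w w' : ℝ → ℝ} {c : ℝ}

lemma tendsto_integral_smul_comp_mul {G : ℝ → V} {L : V} (hG : Continuous G)
    (hL : Tendsto G atTop (𝓝 L)) (hc : 0 ≤ c) (hψ : ContinuousOn ψ (Set.Icc 0 c))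
    (hψ_pos : ∀ θ ∈ Set.Ioc 0 c, 0 < ψ θ) (hw : ContinuousOn w (Set.Icc 0 c)) :
    Tendsto (fun T : ℝ => ∫ θ in (0 : ℝ)..c, w θ • G (T * ψ θ)) atTop
      (𝓝 (∫ θ in (0 : ℝ)..c, w θ • L)) := by
  obtain ⟨M, hM⟩ := exists_norm_le_of_tendsto_atTop hG hL 0
  rw [← Set.uIcc_of_le hc] at hψ hw
  rw [← Set.uIoc_of_le hc] at hψ_pos
  refine intervalIntegral.tendsto_integral_filter_of_dominated_convergence
    (fun θ => |w θ| * M) (Eventually.of_forall fun T => ?_) ?_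
    (hw.abs.mul_const M).intervalIntegrable (ae_of_all _ fun θ hθ => ?_)
  · refine ContinuousOn.aestronglyMeasurable ?_ measurableSet_uIoc
    exact (hw.smul (hG.comp_continuousOn (hψ.const_mul T))).mono Set.uIoc_subset_uIcc
  · filter_upwards [eventually_ge_atTop 0] with T hT
    refine ae_of_all _ fun θ hθ => ?_
    rw [norm_smul, Real.norm_eq_abs]
    gcongr
    exact hM _ (mul_nonneg hT (hψ_pos θ hθ).le)
  · exact (hL.comp (tendsto_id.atTop_mul_const (hψ_pos θ hθ))).const_smul _

lemma tendsto_integral_smul_deriv_smul_comp_mul [CompleteSpace V] {f : ℝ → V} {L : V}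
    (hf : Continuous f) (hL : Tendsto (fun x => ∫ s in (0 : ℝ)..x, f s) atTop (𝓝 L)) (hc : 0 < c)
    (hψ : ∀ θ ∈ Set.Icc 0 c, HasDerivAt ψ (ψ' θ) θ) (hψ' : ContinuousOn ψ' (Set.Icc 0 c))
    (hψ_zero : ψ 0 = 0) (hψ_pos : ∀ θ ∈ Set.Ioc 0 c, 0 < ψ θ)
    (hw : ∀ θ ∈ Set.Icc 0 c, HasDerivAt w (w' θ) θ) (hw' : ContinuousOn w' (Set.Icc 0 c)) :
    Tendsto (fun T : ℝ => ∫ θ in (0 : ℝ)..c, w θ • (T * ψ' θ) • f (T * ψ θ))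
      atTop (𝓝 (w 0 • L)) := by
  set G : ℝ → V := fun x => ∫ s in (0 : ℝ)..x, f s
  have hG (x : ℝ) : HasDerivAt G (f x) x := (hf.integral_hasStrictDerivAt 0 x).hasDerivAt
  have hψ_cont : ContinuousOn ψ (Set.Icc 0 c) := fun θ hθ =>
    (hψ θ hθ).continuousAt.continuousWithinAt
  have bulk := tendsto_integral_smul_comp_mul
    (continuous_iff_continuousAt.2 fun x => (hG x).continuousAt) hL hc.le hψ_cont hψ_pos hw'
  have boundary : Tendsto (fun T => G (T * ψ c)) atTop (𝓝 L) :=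
    hL.comp (tendsto_id.atTop_mul_const (hψ_pos c (Set.right_mem_Ioc.2 hc)))
  rw [← Set.uIcc_of_le hc.le] at hw hw' hψ hψ' hψ_cont
  have hGψ (T : ℝ) : ∀ θ ∈ Set.uIcc 0 c,
      HasDerivAt (fun θ => G (T * ψ θ)) ((T * ψ' θ) • f (T * ψ θ)) θ := fun θ hθ =>
    HasDerivAt.scomp (g₁ := G) θ (hG (T * ψ θ)) ((hψ θ hθ).const_mul T)
  have parts (T : ℝ) : ∫ θ in (0 : ℝ)..c, w θ • (T * ψ' θ) • f (T * ψ θ) =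
      w c • G (T * ψ c) - ∫ θ in (0 : ℝ)..c, w' θ • G (T * ψ θ) := by
    rw [intervalIntegral.integral_smul_deriv_eq_deriv_smul hw (hGψ T) hw'.intervalIntegrable
      ((hψ'.const_mul T).smul (hf.comp_continuousOn (hψ_cont.const_mul T))).intervalIntegrable]
    simp [G, hψ_zero]
  have limit : w c • L - ∫ θ in (0 : ℝ)..c, w' θ • L = w 0 • L := by
    rw [intervalIntegral.integral_smul_const,
      intervalIntegral.integral_eq_sub_of_hasDerivAt hw hw'.intervalIntegrable, ← sub_smul,
      sub_sub_cancel]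
  rw [← limit]
  simpa only [parts] using (boundary.const_smul (w c)).sub bulk

end AbelianLimit

section LatitudeIntegral

variable {b : ℕ}

lemma norm_integral_cexp_I_mul_neg (φ : ℝ → ℝ) (x y : ℝ) :
    ‖∫ s in x..y, Complex.exp (Complex.I * ↑(-φ s))‖ =
      ‖∫ s in x..y, Complex.exp (Complex.I * φ s)‖ := by
  rw [← Complex.norm_conj, ← intervalIntegral.intervalIntegral_conj]
  simp [← Complex.exp_conj]

lemma tendsto_rpow_smul_integral_cexp_sin_pow (hb : b ≠ 0) (k : ℕ) {c : ℝ}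
    (hc : c ∈ Set.Ioo 0 (Real.pi / 2)) {L : ℂ}
    (hL : Tendsto (fun x : ℝ => ∫ s in (0 : ℝ)..x, Complex.exp (Complex.I * ↑(s ^ b)))
      atTop (𝓝 L)) :
    Tendsto (fun t : ℝ => t ^ (1 / b : ℝ) • ∫ θ in (0 : ℝ)..c,
      Real.cos θ ^ k • Complex.exp (Complex.I * ↑(t * Real.sin θ ^ b))) atTop (𝓝 L) := by
  have hcos : ∀ θ ∈ Set.Icc 0 c, Real.cos θ ≠ 0 := fun θ hθ =>
    (Real.cos_pos_of_mem_Ioo ⟨by linarith [hθ.1, Real.pi_pos], by linarith [hθ.2, hc.2]⟩).ne'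
  have hw : ∀ θ ∈ Set.Icc 0 c, HasDerivAt (fun θ => Real.cos θ ^ k / Real.cos θ) _ θ :=
    fun θ hθ => ((Real.hasDerivAt_cos θ).fun_pow k).fun_div (Real.hasDerivAt_cos θ) (hcos θ hθ)
  have hlim := tendsto_integral_smul_deriv_smul_comp_mul (by fun_prop) hL hc.1
    (fun θ _ => Real.hasDerivAt_sin θ) Real.continuous_cos.continuousOn Real.sin_zero
    (fun θ hθ => Real.sin_pos_of_pos_of_lt_pi hθ.1 (by linarith [hθ.2, hc.2, Real.pi_pos])) hw
    (ContinuousOn.div (by fun_prop) (by fun_prop) fun θ hθ => pow_ne_zero 2 (hcos θ hθ))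
  rw [Real.cos_zero, one_pow, div_one, one_smul] at hlim
  have hroot : Tendsto (fun t : ℝ => t ^ (1 / b : ℝ)) atTop atTop :=
    tendsto_rpow_atTop (by positivity)
  refine (hlim.comp hroot).congr' ?_
  filter_upwards [eventually_ge_atTop 0] with t ht
  have hpow : (t ^ (1 / b : ℝ)) ^ b = t := by rw [one_div, Real.rpow_inv_natCast_pow ht hb]
  rw [Function.comp_apply, ← intervalIntegral.integral_smul]
  refine intervalIntegral.integral_congr fun θ hθ => ?_
  have := hcos θ (Set.uIcc_of_le hc.1.le ▸ hθ)
  simp only [smul_smul, mul_pow, hpow]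
  congr 1
  field_simp

lemma exists_forall_one_le_deriv_deriv_neg_cos_pow (hb : 2 ≤ b) :
    ∃ c ∈ Set.Ioo 0 (Real.pi / 2), ∀ θ ∈ Set.Icc 0 c,
      1 ≤ b * (Real.cos θ ^ b - ↑(b - 1) * Real.cos θ ^ (b - 2) * Real.sin θ ^ 2) := by
  have hcont : Continuous fun θ =>
      b * (Real.cos θ ^ b - ↑(b - 1) * Real.cos θ ^ (b - 2) * Real.sin θ ^ 2) := by fun_prop
  obtain ⟨ε, hε, hball⟩ := Metric.eventually_nhds_iff.1
    ((hcont.tendsto 0).eventually_const_lt (u := 1) (by simp; lia))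
  refine ⟨min (ε / 2) 1, ⟨by positivity, ?_⟩, fun θ hθ => (hball ?_).le⟩
  · exact (min_le_right _ _).trans_lt (by linarith [Real.pi_gt_three])
  · rw [Real.dist_0_eq_abs, abs_of_nonneg hθ.1]
    linarith [hθ.2, min_le_left (ε / 2) 1]

lemma hasDerivAt_deriv_neg_cos_pow (hb : 2 ≤ b) (θ : ℝ) :
    HasDerivAt (fun θ => b * (Real.cos θ ^ (b - 1) * Real.sin θ))
      (b * (Real.cos θ ^ b - ↑(b - 1) * Real.cos θ ^ (b - 2) * Real.sin θ ^ 2)) θ := by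
  obtain ⟨m, rfl⟩ := Nat.exists_eq_add_of_le' hb
  refine ((((Real.hasDerivAt_cos θ).fun_pow (m + 2 - 1)).mul
    (Real.hasDerivAt_sin θ)).const_mul _).congr_deriv ?_
  simp only [Nat.add_one_sub_one, Nat.add_sub_cancel, show m + 2 - 1 = m + 1 from rfl]
  ring

lemma exists_norm_integral_sin_pow_cexp_cos_pow_le (hb : 2 ≤ b) (k : ℕ) :
    ∃ c ∈ Set.Ioo 0 (Real.pi / 2), ∃ C, ∀ t > 0, ‖∫ θ in (0 : ℝ)..c,
      Real.sin θ ^ k • Complex.exp (Complex.I * ↑(t * Real.cos θ ^ b))‖ ≤ 3 / √t * C := by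
  obtain ⟨c, hc, hconcave⟩ := exists_forall_one_le_deriv_deriv_neg_cos_pow hb
  refine ⟨c, hc, _, fun t ht => norm_integral_smul_deriv_le hc.1.le
    (fun θ _ => (Real.hasDerivAt_sin θ).fun_pow k) (by fun_prop)
    (F := fun x => ∫ θ in (0 : ℝ)..x, Complex.exp (Complex.I * ↑(t * Real.cos θ ^ b)))
    (fun θ _ => (Continuous.integral_hasStrictDerivAt (by fun_prop) 0 θ).hasDerivAt)
    (by fun_prop) fun x hx => ?_⟩
  rw [← norm_integral_cexp_I_mul_neg]
  refine norm_integral_cexp_le_of_le_deriv_deriv hx.1 ht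
    (φ' := fun θ => t * (b * (Real.cos θ ^ (b - 1) * Real.sin θ)))
    (fun θ _ => ((((Real.hasDerivAt_cos θ).fun_pow b).const_mul t).fun_neg).congr_deriv (by ring))
    (fun θ _ => (hasDerivAt_deriv_neg_cos_pow hb θ).const_mul t) (by fun_prop) (by simp)
    fun θ hθ => le_mul_of_one_le_right ht.le (hconcave θ ⟨hθ.1, hθ.2.trans hx.2⟩)

lemma exists_norm_integral_cos_pow_cexp_sin_pow_le (hb : 2 ≤ b) (k : ℕ) :
    ∃ c ∈ Set.Ioo 0 (Real.pi / 2), ∃ C, ∀ t > 0, ‖∫ θ in c..Real.pi / 2,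
      Real.cos θ ^ k • Complex.exp (Complex.I * ↑(t * Real.sin θ ^ b))‖ ≤ 3 / √t * C := by
  obtain ⟨c, hc, C, hC⟩ := exists_norm_integral_sin_pow_cexp_cos_pow_le hb k
  refine ⟨Real.pi / 2 - c, ⟨by linarith [hc.2], by linarith [hc.1]⟩, C, fun t ht => ?_⟩
  have reflect := intervalIntegral.integral_comp_sub_left (a := 0) (b := c)
    (fun θ => Real.cos θ ^ k • Complex.exp (Complex.I * ↑(t * Real.sin θ ^ b))) (Real.pi / 2)
  simp only [Real.cos_pi_div_two_sub, Real.sin_pi_div_two_sub, sub_zero] at reflect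
  exact reflect ▸ hC t ht

lemma tendsto_rpow_smul_integral_cexp_sin_pow_pi_div_two (hb : 3 ≤ b) (k : ℕ) {L : ℂ}
    (hL : Tendsto (fun x : ℝ => ∫ s in (0 : ℝ)..x, Complex.exp (Complex.I * ↑(s ^ b)))
      atTop (𝓝 L)) :
    Tendsto (fun t : ℝ => t ^ (1 / b : ℝ) • ∫ θ in (0 : ℝ)..Real.pi / 2,
      Real.cos θ ^ k • Complex.exp (Complex.I * ↑(t * Real.sin θ ^ b))) atTop (𝓝 L) := by
  obtain ⟨c, hc, C, hC⟩ := exists_norm_integral_cos_pow_cexp_sin_pow_le (by lia : 2 ≤ b) k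
  have equator := tendsto_rpow_smul_integral_cexp_sin_pow (by lia) k hc hL
  have pole : Tendsto (fun t : ℝ => t ^ (1 / b : ℝ) • ∫ θ in c..Real.pi / 2,
      Real.cos θ ^ k • Complex.exp (Complex.I * ↑(t * Real.sin θ ^ b))) atTop (𝓝 0) := by
    have hexp : (0 : ℝ) < 1 / 2 - 1 / b := by
      have : (3 : ℝ) ≤ b := by exact_mod_cast hb
      have : (1 : ℝ) / b ≤ 1 / 3 := by gcongr
      linarith
    have hzero : Tendsto (fun t : ℝ => t ^ (-(1 / 2 - 1 / b : ℝ)) * (3 * C)) atTop (𝓝 0) := by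
      simpa only [zero_mul] using (tendsto_rpow_neg_atTop hexp).mul_const (3 * C)
    refine squeeze_zero_norm' ?_ hzero
    filter_upwards [eventually_gt_atTop 0] with t ht
    rw [norm_smul, Real.norm_of_nonneg (by positivity), neg_sub, Real.rpow_sub ht,
      ← Real.sqrt_eq_rpow]
    calc t ^ (1 / b : ℝ) * _ ≤ t ^ (1 / b : ℝ) * (3 / √t * C) := by gcongr; exact hC t ht
      _ = t ^ (1 / b : ℝ) / √t * (3 * C) := by ring
  rw [← add_zero L]
  refine (equator.add pole).congr fun t => ?_
  have h_int : ∀ u v : ℝ, IntervalIntegrable (fun θ : ℝ => Real.cos θ ^ k •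
      Complex.exp (Complex.I * ↑(t * Real.sin θ ^ b))) volume u v := fun u v =>
    Continuous.intervalIntegrable (by fun_prop) u v
  rw [← smul_add, intervalIntegral.integral_add_adjacent_intervals (h_int _ _) (h_int _ _)]

lemma integral_neg_pi_div_two_cexp_sin_pow (k : ℕ) (t : ℝ) :
    ∫ θ in -(Real.pi / 2)..0, Real.cos θ ^ k • Complex.exp (Complex.I * ↑(t * Real.sin θ ^ b)) =
      ∫ θ in (0 : ℝ)..Real.pi / 2,
        Real.cos θ ^ k • Complex.exp (Complex.I * ↑((-1) ^ b * (t * Real.sin θ ^ b))) := by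
  have reflect := intervalIntegral.integral_comp_neg (a := 0) (b := Real.pi / 2)
    fun θ => Real.cos θ ^ k • Complex.exp (Complex.I * ↑(t * Real.sin θ ^ b))
  rw [neg_zero] at reflect
  rw [← reflect]
  refine intervalIntegral.integral_congr fun θ _ => ?_
  simp only [Real.cos_neg, Real.sin_neg, neg_pow (Real.sin θ), mul_left_comm]

lemma exists_tendsto_rpow_smul_integral_neg_pi_div_two_cexp_sin_pow (hb : 3 ≤ b) (k : ℕ) {L : ℂ}
    (hL : Tendsto (fun x : ℝ => ∫ s in (0 : ℝ)..x, Complex.exp (Complex.I * ↑(s ^ b)))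
      atTop (𝓝 L)) :
    ∃ L' : ℂ, L'.re = L.re ∧ Tendsto (fun t : ℝ => t ^ (1 / b : ℝ) • ∫ θ in -(Real.pi / 2)..0,
      Real.cos θ ^ k • Complex.exp (Complex.I * ↑(t * Real.sin θ ^ b))) atTop (𝓝 L') := by
  have half := tendsto_rpow_smul_integral_cexp_sin_pow_pi_div_two hb k hL
  simp only [integral_neg_pi_div_two_cexp_sin_pow]
  rcases b.even_or_odd with heven | hodd
  · exact ⟨L, rfl, by simpa only [heven.neg_one_pow, one_mul] using half⟩
  · refine ⟨starRingEnd ℂ L, Complex.conj_re L,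
      ((Complex.continuous_conj.tendsto L).comp half).congr fun t => ?_⟩
    rw [Function.comp_apply, Complex.real_smul, map_mul, Complex.conj_ofReal,
      ← intervalIntegral.intervalIntegral_conj, ← Complex.real_smul]
    simp [hodd.neg_one_pow, ← Complex.exp_conj, ← Complex.sin_conj, ← Complex.cos_conj]

lemma exists_tendsto_rpow_mul_norm_integral_cexp_sin_pow (hb : 3 ≤ b) (k : ℕ) :
    ∃ a : ℝ, 0 < a ∧ Tendsto (fun t : ℝ => t ^ (1 / b : ℝ) *
      ‖∫ θ in -(Real.pi / 2)..Real.pi / 2,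
        Real.cos θ ^ k • Complex.exp (Complex.I * ↑(t * Real.sin θ ^ b))‖) atTop (𝓝 a) := by
  obtain ⟨L, hL⟩ := exists_tendsto_integral_cexp_pow (by lia : 2 ≤ b)
  have hL_pos := re_pos_of_tendsto_integral_cexp_pow (by lia) hL
  obtain ⟨L', hL', south⟩ :=
    exists_tendsto_rpow_smul_integral_neg_pi_div_two_cexp_sin_pow hb k hL
  have north := tendsto_rpow_smul_integral_cexp_sin_pow_pi_div_two hb k hL
  have hne : L' + L ≠ 0 := fun h => by
    have := congrArg Complex.re h
    rw [Complex.add_re, hL', Complex.zero_re] at this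
    linarith
  refine ⟨‖L' + L‖, norm_pos_iff.2 hne, (south.add north).norm.congr' ?_⟩
  filter_upwards [eventually_ge_atTop 0] with t ht
  have h_int : ∀ u v : ℝ, IntervalIntegrable (fun θ : ℝ => Real.cos θ ^ k •
      Complex.exp (Complex.I * ↑(t * Real.sin θ ^ b))) volume u v := fun u v =>
    Continuous.intervalIntegrable (by fun_prop) u v
  rw [← smul_add, intervalIntegral.integral_add_adjacent_intervals (h_int _ _) (h_int _ _),
    norm_smul, Real.norm_of_nonneg (by positivity)]

end LatitudeIntegral

section UniformlyDistributed

variable {X : Type*} [PseudoMetricSpace X] [MeasurableSpace X]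

/-- A measure on a metric space is uniformly distributed if balls of equal radius have equal
measure. Neither finiteness nor positivity of the measure of balls is part of the definition. -/
def IsUniformlyDistributed (μ : Measure X) : Prop :=
  ∀ (r : ℝ) (x y : X), μ (Metric.ball x r) = μ (Metric.ball y r)

lemma measure_ball_pos_of_isUniformlyDistributed [CompactSpace X] {ν : Measure X}
    (hν : IsUniformlyDistributed ν) (hν0 : ν ≠ 0) {r : ℝ} (hr : 0 < r) (z : X) :
    0 < ν (Metric.ball z r) := by
  refine pos_iff_ne_zero.2 fun h => hν0 (Measure.measure_univ_eq_zero.1 ?_)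
  exact isCompact_univ.measure_zero_of_nhdsWithin fun x _ =>
    ⟨Metric.ball x r, mem_nhdsWithin_of_mem_nhds (Metric.ball_mem_nhds x hr), hν r x z ▸ h⟩

variable [BorelSpace X] {μ ν : Measure X}

lemma lintegral_setLIntegral_ball [SecondCountableTopology X] [SFinite μ] [SFinite ν]
    (hμ : IsUniformlyDistributed μ) {f : X → ℝ≥0∞} (hf : Measurable f) (r : ℝ) (z : X) :
    ∫⁻ x, ∫⁻ y in Metric.ball x r, f y ∂ν ∂μ = μ (Metric.ball z r) * ∫⁻ y, f y ∂ν := by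
  have hball : MeasurableSet {p : X × X | dist p.2 p.1 < r} :=
    measurableSet_lt (by fun_prop) measurable_const
  have hind : Measurable (Function.uncurry fun x y =>
      {p : X × X | dist p.2 p.1 < r}.indicator (fun p => f p.2) (x, y)) :=
    (hf.comp measurable_snd).indicator hball
  calc ∫⁻ x, ∫⁻ y in Metric.ball x r, f y ∂ν ∂μ
      = ∫⁻ x, ∫⁻ y, {p : X × X | dist p.2 p.1 < r}.indicator (fun p => f p.2) (x, y) ∂ν ∂μ :=
        lintegral_congr fun x => (lintegral_indicator measurableSet_ball f).symm
    _ = ∫⁻ y, ∫⁻ x, (Metric.ball y r).indicator (fun _ => f y) x ∂μ ∂ν := by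
        refine (lintegral_lintegral_swap hind.aemeasurable).trans ?_
        refine lintegral_congr fun y => lintegral_congr fun x => ?_
        simp only [Set.indicator, Set.mem_ofPred_eq, Metric.mem_ball, dist_comm]
    _ = ∫⁻ y, μ (Metric.ball z r) * f y ∂ν := by
        refine lintegral_congr fun y => ?_
        rw [lintegral_indicator_const measurableSet_ball, hμ r y z, mul_comm]
    _ = μ (Metric.ball z r) * ∫⁻ y, f y ∂ν := lintegral_const_mul _ hf

variable [CompactSpace X] [IsFiniteMeasure μ] [IsFiniteMeasure ν]

lemma measure_univ_mul_lintegral_le_add (hμ : IsUniformlyDistributed μ)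
    (hν : IsUniformlyDistributed ν) (hν0 : ν ≠ 0) {f : X → NNReal} (hf : Continuous f) {ε : NNReal}
    (hε : 0 < ε) :
    μ Set.univ * ∫⁻ x, f x ∂ν ≤ ν Set.univ * (∫⁻ x, f x ∂μ + ε * μ Set.univ) := by
  have : SecondCountableTopology X := EMetric.secondCountable_of_sigmaCompact X
  obtain ⟨z⟩ : Nonempty X := by
    by_contra hX
    exact hν0 (@Measure.eq_zero_of_isEmpty X (not_nonempty_iff.1 hX) _ ν)
  obtain ⟨r, hr, hclose⟩ := Metric.uniformContinuous_iff.1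
    (CompactSpace.uniformContinuous_of_continuous hf) ε hε
  have hball := (measure_ball_pos_of_isUniformlyDistributed hν hν0 hr z).ne'
  have total : μ (Metric.ball z r) * ν Set.univ = μ Set.univ * ν (Metric.ball z r) := by
    have := lintegral_setLIntegral_ball (ν := ν) hμ (f := fun _ => 1) measurable_const r z
    simpa [hν r _ z, mul_comm] using this.symm
  have average : μ (Metric.ball z r) * ∫⁻ x, f x ∂ν ≤
      ν (Metric.ball z r) * (∫⁻ x, f x ∂μ + ε * μ Set.univ) := by
    rw [← lintegral_setLIntegral_ball hμ hf.measurable.coe_nnreal_ennreal, ← lintegral_const,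
      ← lintegral_add_right _ measurable_const, ← lintegral_const_mul' _ _ (measure_ne_top _ _)]
    refine lintegral_mono fun x => ?_
    rw [← hν r x z, mul_comm, ← setLIntegral_const]
    refine setLIntegral_mono measurable_const fun y hy => ?_
    have : (f y : ℝ) - f x ≤ ε := (le_abs_self _).trans (hclose hy).le
    exact_mod_cast sub_le_iff_le_add'.1 this
  refine (ENNReal.mul_le_mul_iff_right hball (measure_ne_top _ _)).1 ?_
  calc ν (Metric.ball z r) * (μ Set.univ * ∫⁻ x, f x ∂ν)
      = ν Set.univ * (μ (Metric.ball z r) * ∫⁻ x, f x ∂ν) := by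
        rw [← mul_assoc, mul_comm (ν _), ← total]; ring
    _ ≤ ν Set.univ * (ν (Metric.ball z r) * (∫⁻ x, f x ∂μ + ε * μ Set.univ)) := by gcongr
    _ = ν (Metric.ball z r) * (ν Set.univ * (∫⁻ x, f x ∂μ + ε * μ Set.univ)) := by ring

lemma measure_univ_mul_lintegral_le (hμ : IsUniformlyDistributed μ)
    (hν : IsUniformlyDistributed ν) {f : X → NNReal} (hf : Continuous f) :
    μ Set.univ * ∫⁻ x, f x ∂ν ≤ ν Set.univ * ∫⁻ x, f x ∂μ := by
  rcases eq_or_ne ν 0 with rfl | hν0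
  · simp
  have hlim : Tendsto (fun ε : NNReal => ν Set.univ * (∫⁻ x, f x ∂μ + ε * μ Set.univ)) (𝓝[>] 0)
      (𝓝 (ν Set.univ * (∫⁻ x, f x ∂μ + (0 : NNReal) * μ Set.univ))) := by
    refine tendsto_nhdsWithin_of_tendsto_nhds (ENNReal.Tendsto.const_mul
      (tendsto_const_nhds.add (ENNReal.Tendsto.mul_const ?_ (Or.inr (measure_ne_top _ _))))
      (Or.inr (measure_ne_top _ _)))
    exact ENNReal.continuous_coe.tendsto 0
  rw [ENNReal.coe_zero, zero_mul, add_zero] at hlim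
  exact ge_of_tendsto hlim (eventually_mem_nhdsWithin.mono fun ε hε =>
    measure_univ_mul_lintegral_le_add hμ hν hν0 hf hε)

lemma measure_univ_smul_eq_of_isUniformlyDistributed (hμ : IsUniformlyDistributed μ)
    (hν : IsUniformlyDistributed ν) : ν Set.univ • μ = μ Set.univ • ν := by
  have : IsFiniteMeasure (ν Set.univ • μ) := μ.smul_finite (measure_ne_top _ _)
  refine ext_of_forall_lintegral_eq_of_IsFiniteMeasure fun f => ?_
  rw [lintegral_smul_measure, lintegral_smul_measure]
  exact (measure_univ_mul_lintegral_le hν hμ f.continuous).antisymm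
    (measure_univ_mul_lintegral_le hμ hν f.continuous)

end UniformlyDistributed

section UnitSphere

variable {E : Type*} [NormedAddCommGroup E] [InnerProductSpace ℝ E]

section UniformMeasures

variable [MeasurableSpace E] [BorelSpace E]

lemma isUniformlyDistributed_of_linearIsometryEquiv_image_eq
    {ρ : Measure (Metric.sphere (0 : E) 1)}
    (hρ : ∀ (A : E ≃ₗᵢ[ℝ] E) (s t : Set (Metric.sphere (0 : E) 1)), MeasurableSet s →
      MeasurableSet t → A '' (Subtype.val '' s) = Subtype.val '' t → ρ s = ρ t) :
    IsUniformlyDistributed ρ := by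
  intro r x y
  have hxy : ‖(x : E)‖ = ‖(y : E)‖ := by simp only [norm_eq_of_mem_sphere]
  refine hρ (Submodule.reflection (Submodule.span ℝ {(x - y : E)})ᗮ) _ _ measurableSet_ball
    measurableSet_ball ?_
  rw [Subtype.image_ball, Subtype.image_ball, Set.ofPred_mem_eq,
    Set.image_inter (LinearIsometryEquiv.injective _), LinearIsometryEquiv.image_ball,
    LinearIsometryEquiv.image_sphere, map_zero, Submodule.reflection_sub hxy]

lemma isUniformlyDistributed_hausdorffMeasure_sphere {d : ℝ} (hd : 0 ≤ d) :
    IsUniformlyDistributed (μH[d] : Measure (Metric.sphere (0 : E) 1)) := by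
  refine isUniformlyDistributed_of_linearIsometryEquiv_image_eq fun A s t _ _ hst => ?_
  rw [← isometry_subtype_coe.hausdorffMeasure_image (Or.inl hd) s,
    ← isometry_subtype_coe.hausdorffMeasure_image (Or.inl hd) t, ← hst,
    A.isometry.hausdorffMeasure_image (Or.inl hd)]

open scoped Pointwise in
lemma isUniformlyDistributed_toSphere_volume [FiniteDimensional ℝ E] :
    IsUniformlyDistributed (volume : Measure E).toSphere := by
  refine isUniformlyDistributed_of_linearIsometryEquiv_image_eq fun A s t hs ht hst => ?_
  have cone : A '' (Set.Ioo (0 : ℝ) 1 • Subtype.val '' s) =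
      Set.Ioo (0 : ℝ) 1 • Subtype.val '' t := by
    rw [← hst, ← Set.image2_smul, ← Set.image2_smul]
    exact Set.image_image2_distrib_right fun r x => map_smul A r x
  rw [Measure.toSphere_apply' _ hs, Measure.toSphere_apply' _ ht, ← cone,
    A.image_eq_preimage_symm, A.symm.measurePreserving.measure_preimage_emb
      A.symm.toHomeomorph.measurableEmbedding]

end UniformMeasures

lemma hausdorffMeasure_finrank_image_lt_top {F X : Type*} [NormedAddCommGroup F]
    [InnerProductSpace ℝ F] [FiniteDimensional ℝ F] [MeasurableSpace F] [BorelSpace F]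
    [NormedAddCommGroup X] [NormedSpace ℝ X] [MeasurableSpace X] [BorelSpace X] {f : F → X}
    (hf : ContDiff ℝ 1 f) {s : Set F} (hs : IsCompact s) :
    μH[Module.finrank ℝ F] (f '' s) < ∞ := by
  obtain ⟨K, hK⟩ := hf.locallyLipschitz.locallyLipschitzOn.exists_lipschitzOnWith_of_compact hs
  refine (hK.hausdorffMeasure_image_le (Nat.cast_nonneg _)).trans_lt ?_
  exact ENNReal.mul_lt_top (by simp) hs.measure_lt_top

section HausdorffSphere

variable {d : ℕ} [hd : Fact (Module.finrank ℝ E = d + 1)] {v : E}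

lemma finrank_orthogonal_span_singleton_of_norm_eq_one (hv : ‖v‖ = 1) :
    Module.finrank ℝ (Submodule.span ℝ {v})ᗮ = d :=
  Submodule.finrank_orthogonal_span_singleton (norm_ne_zero_iff.1 (hv ▸ one_ne_zero))

lemma half_sphere_subset_image_stereoInvFunAux (hv : ‖v‖ = 1) :
    {x : E | ‖x‖ = 1 ∧ inner ℝ v x ≤ 0} ⊆
      (fun w : (Submodule.span ℝ {v})ᗮ => stereoInvFunAux v w) '' Metric.closedBall 0 2 := by
  rintro x ⟨hx, hvx⟩
  have hxv : x ≠ v := by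
    rintro rfl
    rw [real_inner_self_eq_norm_sq, hv] at hvx
    norm_num at hvx
  have left_inv := stereo_left_inv hv (x := ⟨x, mem_sphere_zero_iff_norm.2 hx⟩) hxv
  refine ⟨stereoToFun v x, ?_, congrArg Subtype.val left_inv⟩
  have hproj : ‖(Submodule.span ℝ {v})ᗮ.orthogonalProjectionOnto x‖ ≤ 1 :=
    hx ▸ Submodule.norm_orthogonalProjectionOnto_apply_le _ _
  have hscale : ‖2 / ((1 : ℝ) - innerSL ℝ v x)‖ ≤ 2 := by
    rw [innerSL_apply_apply, Real.norm_of_nonneg (div_nonneg zero_le_two (by linarith)),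
      div_le_iff₀ (by linarith)]
    linarith
  rw [mem_closedBall_zero_iff, stereoToFun_apply, norm_smul]
  exact (mul_le_mul hscale hproj (norm_nonneg _) zero_le_two).trans_eq (mul_one 2)

lemma ball_subset_image_orthogonalProjectionOnto_sphere (hv : ‖v‖ = 1) :
    Metric.ball 0 1 ⊆
      (Submodule.span ℝ {v})ᗮ.orthogonalProjectionOnto '' Metric.sphere (0 : E) 1 := by
  intro w hw
  rw [mem_ball_zero_iff] at hw
  have hwv : inner ℝ (w : E) v = 0 := Submodule.mem_orthogonal_singleton_iff_inner_left.1 w.2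
  refine ⟨w + √(1 - ‖w‖ ^ 2) • v, ?_, ?_⟩
  · have hsq : ‖(w : E) + √(1 - ‖w‖ ^ 2) • v‖ ^ 2 = 1 := by
      rw [norm_add_sq_real, inner_smul_right, hwv, norm_smul, hv, mul_one,
        Real.norm_of_nonneg (Real.sqrt_nonneg _), Real.sq_sqrt (by nlinarith [norm_nonneg w])]
      simp
    exact mem_sphere_zero_iff_norm.2 ((pow_eq_one_iff_of_nonneg (norm_nonneg _) two_ne_zero).1 hsq)
  · rw [map_add, map_smul,
      Submodule.orthogonalProjectionOnto_orthogonalComplement_singleton_eq_zero v]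
    simp

variable [FiniteDimensional ℝ E] [MeasurableSpace E] [BorelSpace E]

lemma hausdorffMeasure_half_sphere_lt_top (hv : ‖v‖ = 1) :
    μH[d] {x : E | ‖x‖ = 1 ∧ inner ℝ v x ≤ 0} < ∞ := by
  refine (measure_mono (half_sphere_subset_image_stereoInvFunAux hv)).trans_lt ?_
  have := hausdorffMeasure_finrank_image_lt_top
    ((contDiff_stereoInvFunAux (v := v)).comp (Submodule.span ℝ {v})ᗮ.subtypeL.contDiff)
    (isCompact_closedBall 0 2)
  rwa [finrank_orthogonal_span_singleton_of_norm_eq_one (d := d) hv] at this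

lemma hausdorffMeasure_sphere_lt_top_s4 : μH[d] (Metric.sphere (0 : E) 1) < ∞ := by
  have : Nontrivial E := Module.nontrivial_of_finrank_eq_succ hd.out
  obtain ⟨v, hv⟩ := exists_norm_eq E (zero_le_one (α := ℝ))
  have cover : Metric.sphere (0 : E) 1 ⊆
      {x : E | ‖x‖ = 1 ∧ inner ℝ v x ≤ 0} ∪ {x : E | ‖x‖ = 1 ∧ inner ℝ (-v) x ≤ 0} := by
    intro x hx
    rw [mem_sphere_zero_iff_norm] at hx
    rcases le_total (inner ℝ v x) 0 with h | h
    · exact Or.inl ⟨hx, h⟩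
    · exact Or.inr ⟨hx, by rwa [inner_neg_left, neg_nonpos]⟩
  exact (measure_mono cover).trans_lt (measure_union_lt_top (hausdorffMeasure_half_sphere_lt_top hv)
    (hausdorffMeasure_half_sphere_lt_top ((norm_neg v).trans hv)))

lemma hausdorffMeasure_sphere_pos : 0 < μH[d] (Metric.sphere (0 : E) 1) := by
  have : Nontrivial E := Module.nontrivial_of_finrank_eq_succ hd.out
  obtain ⟨v, hv⟩ := exists_norm_eq E (zero_le_one (α := ℝ))
  have hball : 0 < μH[d] (Metric.ball (0 : (Submodule.span ℝ {v})ᗮ) 1) := by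
    rw [← finrank_orthogonal_span_singleton_of_norm_eq_one (d := d) hv]
    exact Metric.measure_ball_pos _ _ one_pos
  have hproj := (Submodule.span ℝ {v})ᗮ.lipschitzWith_orthogonalProjectionOnto
    |>.hausdorffMeasure_image_le (Nat.cast_nonneg (α := ℝ) d) (Metric.sphere (0 : E) 1)
  rw [ENNReal.coe_one, ENNReal.one_rpow, one_mul] at hproj
  exact hball.trans_le
    ((measure_mono (ball_subset_image_orthogonalProjectionOnto_sphere hv)).trans hproj)

lemma exists_hausdorffMeasure_eq_smul_toSphere :
    ∃ c : NNReal, 0 < c ∧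
      (μH[d] : Measure (Metric.sphere (0 : E) 1)) = c • (volume : Measure E).toSphere := by
  have : Nontrivial E := Module.nontrivial_of_finrank_eq_succ hd.out
  have hd0 : (0 : ℝ) ≤ d := Nat.cast_nonneg d
  have htotal : (μH[d] : Measure (Metric.sphere (0 : E) 1)) Set.univ =
      μH[d] (Metric.sphere (0 : E) 1) := by
    rw [← isometry_subtype_coe.hausdorffMeasure_image (Or.inl hd0), Set.image_univ,
      Subtype.range_coe]
  have : IsFiniteMeasure (μH[d] : Measure (Metric.sphere (0 : E) 1)) :=
    ⟨htotal ▸ hausdorffMeasure_sphere_lt_top_s4⟩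
  set σ := (volume : Measure E).toSphere
  have hσ0 : σ Set.univ ≠ 0 := Measure.measure_univ_eq_zero.not.2 (Measure.toSphere_ne_zero _)
  have hσ := measure_ne_top σ Set.univ
  have hratio : μH[d] (Metric.sphere (0 : E) 1) / σ Set.univ ≠ ∞ :=
    ENNReal.div_ne_top hausdorffMeasure_sphere_lt_top_s4.ne hσ0
  refine ⟨(μH[d] (Metric.sphere (0 : E) 1) / σ Set.univ).toNNReal, ENNReal.toNNReal_pos
    (ENNReal.div_pos hausdorffMeasure_sphere_pos.ne' hσ).ne' hratio, ?_⟩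
  have proportional := measure_univ_smul_eq_of_isUniformlyDistributed
    (isUniformlyDistributed_hausdorffMeasure_sphere (E := E) hd0)
    isUniformlyDistributed_toSphere_volume
  ext s _
  have := congrArg (fun ρ => ρ s) proportional
  simp only [Measure.smul_apply, smul_eq_mul, htotal] at this
  rw [Measure.smul_apply, ENNReal.smul_def, ENNReal.coe_toNNReal hratio, smul_eq_mul,
    ENNReal.mul_div_right_comm.symm, ENNReal.eq_div_iff hσ0 hσ, this]

end HausdorffSphere

end UnitSphere

section PolarCoordinates

lemma lintegral_eq_lintegral_toSphere {E : Type*} [NormedAddCommGroup E] [NormedSpace ℝ E]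
    [FiniteDimensional ℝ E] [Nontrivial E] [MeasurableSpace E] [BorelSpace E] (μ : Measure E)
    [μ.IsAddHaarMeasure] {g : E → ℝ≥0∞} (hg : Measurable g) :
    ∫⁻ x, g x ∂μ = ∫⁻ y, (∫⁻ r in Set.Ioi (0 : ℝ),
      ENNReal.ofReal (r ^ (Module.finrank ℝ E - 1)) * g (r • (y : E))) ∂μ.toSphere := by
  have hcoord : Measurable fun p : Metric.sphere (0 : E) 1 × Set.Ioi (0 : ℝ) =>
      g ((p.2 : ℝ) • (p.1 : E)) := hg.comp (by fun_prop)
  calc ∫⁻ x, g x ∂μ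
      = ∫⁻ x : ({0}ᶜ : Set E), g x ∂μ.comap Subtype.val := by
        rw [lintegral_subtype_comap (measurableSet_singleton 0).compl g,
          restrict_compl_singleton]
    _ = ∫⁻ p, g ((p.2 : ℝ) • (p.1 : E))
          ∂μ.toSphere.prod (.volumeIoiPow (Module.finrank ℝ E - 1)) := by
        rw [← μ.measurePreserving_homeomorphUnitSphereProd.lintegral_comp hcoord]
        refine lintegral_congr fun x => congrArg g ?_
        exact congrArg Subtype.val ((homeomorphUnitSphereProd E).symm_apply_apply x).symm
    _ = _ := by
        rw [lintegral_prod _ hcoord.aemeasurable]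
        refine lintegral_congr fun y => ?_
        rw [Measure.volumeIoiPow, lintegral_withDensity_eq_lintegral_mul _ (by fun_prop)
          (by fun_prop)]
        exact lintegral_subtype_comap measurableSet_Ioi fun r : ℝ =>
          ENNReal.ofReal (r ^ (Module.finrank ℝ E - 1)) * g (r • (y : E))

lemma lintegral_fun_norm_eq_toSphere_univ_mul {E : Type*} [NormedAddCommGroup E] [NormedSpace ℝ E]
    [FiniteDimensional ℝ E] [Nontrivial E] [MeasurableSpace E] [BorelSpace E] (μ : Measure E)
    [μ.IsAddHaarMeasure] {g : ℝ → ℝ≥0∞} (hg : Measurable g) :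
    ∫⁻ x, g ‖x‖ ∂μ = μ.toSphere Set.univ *
      ∫⁻ r in Set.Ioi (0 : ℝ), ENNReal.ofReal (r ^ (Module.finrank ℝ E - 1)) * g r := by
  have hnorm (y : Metric.sphere (0 : E) 1) : ∀ r ∈ Set.Ioi (0 : ℝ),
      ENNReal.ofReal (r ^ (Module.finrank ℝ E - 1)) * g ‖r • (y : E)‖ =
        ENNReal.ofReal (r ^ (Module.finrank ℝ E - 1)) * g r := fun r hr => by
    rw [norm_smul, norm_eq_of_mem_sphere, mul_one, Real.norm_of_nonneg hr.le]
  rw [lintegral_eq_lintegral_toSphere μ (g := fun x => g ‖x‖) (by fun_prop), mul_comm,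
    ← lintegral_const]
  exact lintegral_congr fun y => setLIntegral_congr_fun measurableSet_Ioi (hnorm y)

lemma setLIntegral_right_half_plane_eq_polar (f : ℝ × ℝ → ℝ≥0∞) :
    ∫⁻ p in Set.Ioi 0 ×ˢ Set.univ, f p =
      ∫⁻ p in Set.Ioi 0 ×ˢ Set.Ioo (-(Real.pi / 2)) (Real.pi / 2),
        ENNReal.ofReal p.1 * f (p.1 * Real.cos p.2, p.1 * Real.sin p.2) := by
  have hsub : Set.Ioi (0 : ℝ) ×ˢ Set.Ioo (-(Real.pi / 2)) (Real.pi / 2) ⊆ polarCoord.target :=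
    Set.prod_mono_right (Set.Ioo_subset_Ioo (by linarith [Real.pi_pos]) (by linarith [Real.pi_pos]))
  rw [← lintegral_indicator (measurableSet_Ioi.prod .univ), ← lintegral_comp_polarCoord_symm,
    ← Set.inter_eq_self_of_subset_left hsub,
    ← setLIntegral_indicator (measurableSet_Ioi.prod measurableSet_Ioo)]
  refine setLIntegral_congr_fun polarCoord.open_target.measurableSet fun p hp => ?_
  obtain ⟨ρ, θ⟩ := p
  obtain ⟨hρ : 0 < ρ, hθ : -Real.pi < θ ∧ θ < Real.pi⟩ := hp
  have hmem : (ρ * Real.cos θ, ρ * Real.sin θ) ∈ Set.Ioi (0 : ℝ) ×ˢ (Set.univ : Set ℝ) ↔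
      (ρ, θ) ∈ Set.Ioi (0 : ℝ) ×ˢ Set.Ioo (-(Real.pi / 2)) (Real.pi / 2) := by
    simp only [Set.mem_prod, Set.mem_Ioi, Set.mem_univ, and_true, hρ, true_and,
      mul_pos_iff_of_pos_left]
    refine ⟨fun hcos => ?_, Real.cos_pos_of_mem_Ioo⟩
    rw [Set.mem_Ioo, ← abs_lt]
    by_contra! hle
    have hle' : |θ| ≤ Real.pi + Real.pi / 2 := by linarith [abs_lt.2 hθ, Real.pi_pos]
    exact hcos.not_ge (Real.cos_abs θ ▸ Real.cos_nonpos_of_pi_div_two_le_of_le hle hle')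
  rw [polarCoord_symm_apply, smul_eq_mul]
  simp only [Set.indicator_apply, hmem, mul_ite, mul_zero]

/-- A function on `(0, ∞)` with `∫⁻ r, r ^ m * unitRadialMass m r = 1`; multiplying a homogeneous
function by it turns an integral over the space into one over the unit sphere. -/
noncomputable def unitRadialMass (m : ℕ) : ℝ → ℝ≥0∞ :=
  (Set.Ioo 0 1).indicator fun r => (ENNReal.ofReal (r ^ m))⁻¹

@[fun_prop]
lemma measurable_unitRadialMass (m : ℕ) : Measurable (unitRadialMass m) :=
  Measurable.indicator (by fun_prop) measurableSet_Ioo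

lemma lintegral_ofReal_pow_mul_unitRadialMass_mul (m : ℕ) (c : ℝ≥0∞) :
    ∫⁻ r in Set.Ioi (0 : ℝ), ENNReal.ofReal (r ^ m) * (unitRadialMass m r * c) = c := by
  have hcancel : ∀ r ∈ Set.Ioi (0 : ℝ), ENNReal.ofReal (r ^ m) * (unitRadialMass m r * c) =
      (Set.Ioo 0 1).indicator (fun _ => c) r := by
    intro r (hr : 0 < r)
    have hpos : ENNReal.ofReal (r ^ m) ≠ 0 := by simpa using pow_pos hr m
    by_cases h : r ∈ Set.Ioo (0 : ℝ) 1
    · rw [unitRadialMass, Set.indicator_of_mem h, Set.indicator_of_mem h, ← mul_assoc,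
        ENNReal.mul_inv_cancel hpos ENNReal.ofReal_ne_top, one_mul]
    · rw [unitRadialMass, Set.indicator_of_notMem h, Set.indicator_of_notMem h, zero_mul, mul_zero]
  rw [setLIntegral_congr_fun measurableSet_Ioi hcancel, setLIntegral_indicator measurableSet_Ioo,
    Set.inter_eq_self_of_subset_left Set.Ioo_subset_Ioi_self]
  simp

end PolarCoordinates

section LatitudeDistribution

variable {E : Type*} [NormedAddCommGroup E] [InnerProductSpace ℝ E] [FiniteDimensional ℝ E]
  [MeasurableSpace E] [BorelSpace E] {v : E}

lemma lintegral_eq_lintegral_lintegral_smul_add (hv : ‖v‖ = 1) {g : E → ℝ≥0∞}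
    (hg : Measurable g) :
    ∫⁻ x, g x = ∫⁻ s : ℝ, ∫⁻ w : (Submodule.span ℝ {v})ᗮ, g (s • v + w) := by
  have axis : MeasurePreserving (Prod.map (LinearIsometryEquiv.toSpanUnitSingleton (𝕜 := ℝ) v hv)
      (id : (Submodule.span ℝ {v})ᗮ → (Submodule.span ℝ {v})ᗮ)) :=
    (LinearIsometryEquiv.measurePreserving _).prod (.id _)
  have decomp := (Submodule.span ℝ {v}).orthogonalDecomposition.symm.measurePreserving.comp
    ((WithLp.volume_preserving_toLp _ _).comp axis)
  rw [← decomp.lintegral_comp hg]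
  have hadd : Measurable fun p : ℝ × (Submodule.span ℝ {v})ᗮ => g (p.1 • v + p.2) :=
    hg.comp (by fun_prop)
  refine Eq.trans ?_ (lintegral_prod _ hadd.aemeasurable)
  simp [Measure.volume_eq_prod]

variable {k : ℕ} [hk : Fact (Module.finrank ℝ E = k + 1 + 1)]

lemma lintegral_inner_norm_eq_half_plane (hv : ‖v‖ = 1) {K : ℝ × ℝ → ℝ≥0∞}
    (hK : Measurable K) :
    ∫⁻ x : E, K (inner ℝ v x, ‖x‖) =
      (volume : Measure (Submodule.span ℝ {v})ᗮ).toSphere Set.univ *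
        ∫⁻ p : ℝ × ℝ in Set.Ioi 0 ×ˢ Set.univ,
          ENNReal.ofReal (p.1 ^ k) * K (p.2, √(p.2 ^ 2 + p.1 ^ 2)) := by
  have hdim : Module.finrank ℝ (Submodule.span ℝ {v})ᗮ = k + 1 :=
    finrank_orthogonal_span_singleton_of_norm_eq_one hv
  have : Nontrivial (Submodule.span ℝ {v})ᗮ := Module.nontrivial_of_finrank_eq_succ hdim
  have hinner (s : ℝ) (w : (Submodule.span ℝ {v})ᗮ) : inner ℝ v (s • v + w) = s := by
    rw [inner_add_right, inner_smul_right, real_inner_self_eq_norm_sq, hv,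
      Submodule.mem_orthogonal_singleton_iff_inner_right.1 w.2]
    ring
  have hnorm (s : ℝ) (w : (Submodule.span ℝ {v})ᗮ) : ‖s • v + w‖ = √(s ^ 2 + ‖w‖ ^ 2) := by
    have hperp : inner ℝ (s • v) (w : E) = 0 := by
      rw [inner_smul_left, Submodule.mem_orthogonal_singleton_iff_inner_right.1 w.2, mul_zero]
    rw [← Real.sqrt_sq (norm_nonneg (s • v + (w : E))), sq,
      norm_add_sq_eq_norm_sq_add_norm_sq_real hperp, norm_smul, hv, mul_one, ← sq, ← sq,
      Real.norm_eq_abs, sq_abs, Submodule.coe_norm]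
  have radial (s : ℝ) : ∫⁻ w : (Submodule.span ℝ {v})ᗮ, K (s, √(s ^ 2 + ‖w‖ ^ 2)) =
      (volume : Measure (Submodule.span ℝ {v})ᗮ).toSphere Set.univ *
        ∫⁻ r in Set.Ioi (0 : ℝ), ENNReal.ofReal (r ^ k) * K (s, √(s ^ 2 + r ^ 2)) := by
    rw [lintegral_fun_norm_eq_toSphere_univ_mul volume
      (g := fun r => K (s, √(s ^ 2 + r ^ 2))) (by fun_prop), hdim, Nat.add_sub_cancel]
  rw [lintegral_eq_lintegral_lintegral_smul_add hv (g := fun x => K (inner ℝ v x, ‖x‖))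
    (by fun_prop)]
  simp only [hinner, hnorm, radial]
  rw [lintegral_const_mul' _ _ (measure_ne_top _ _), Measure.volume_eq_prod,
    ← Measure.prod_restrict, Measure.restrict_univ, lintegral_prod_symm _ (by fun_prop)]

lemma lintegral_inner_norm_eq_polar (hv : ‖v‖ = 1) {K : ℝ × ℝ → ℝ≥0∞}
    (hK : Measurable K) :
    ∫⁻ x : E, K (inner ℝ v x, ‖x‖) =
      (volume : Measure (Submodule.span ℝ {v})ᗮ).toSphere Set.univ *
        ∫⁻ θ in Set.Ioo (-(Real.pi / 2)) (Real.pi / 2), ENNReal.ofReal (Real.cos θ ^ k) *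
          ∫⁻ ρ in Set.Ioi (0 : ℝ), ENNReal.ofReal (ρ ^ (k + 1)) * K (ρ * Real.sin θ, ρ) := by
  have hpolar : ∀ p ∈ Set.Ioi (0 : ℝ) ×ˢ Set.Ioo (-(Real.pi / 2)) (Real.pi / 2),
      ENNReal.ofReal p.1 * (ENNReal.ofReal ((p.1 * Real.cos p.2) ^ k) * K (p.1 * Real.sin p.2,
        √((p.1 * Real.sin p.2) ^ 2 + (p.1 * Real.cos p.2) ^ 2))) =
      ENNReal.ofReal (Real.cos p.2 ^ k) *
        (ENNReal.ofReal (p.1 ^ (k + 1)) * K (p.1 * Real.sin p.2, p.1)) := by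
    rintro ⟨ρ, θ⟩ ⟨hρ : 0 < ρ, hθ⟩
    have hcos := (Real.cos_pos_of_mem_Ioo hθ).le
    have hradius : √((ρ * Real.sin θ) ^ 2 + (ρ * Real.cos θ) ^ 2) = ρ := by
      rw [mul_pow, mul_pow, ← mul_add, Real.sin_sq_add_cos_sq, mul_one, Real.sqrt_sq hρ.le]
    rw [hradius, ← mul_assoc, ← mul_assoc, ← ENNReal.ofReal_mul hρ.le,
      ← ENNReal.ofReal_mul (pow_nonneg hcos k)]
    ring_nf
  rw [lintegral_inner_norm_eq_half_plane (k := k) hv hK, setLIntegral_right_half_plane_eq_polar,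
    setLIntegral_congr_fun (measurableSet_Ioi.prod measurableSet_Ioo) hpolar,
    Measure.volume_eq_prod, ← Measure.prod_restrict, lintegral_prod_symm _ (by fun_prop)]
  simp only [lintegral_const_mul' _ _ ENNReal.ofReal_ne_top]

lemma lintegral_inner_toSphere (hv : ‖v‖ = 1) {F : ℝ → ℝ≥0∞} (hF : Measurable F) :
    ∫⁻ y, F (inner ℝ v (y : E)) ∂(volume : Measure E).toSphere =
      (volume : Measure (Submodule.span ℝ {v})ᗮ).toSphere Set.univ *
        ∫⁻ θ in Set.Ioo (-(Real.pi / 2)) (Real.pi / 2),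
          ENNReal.ofReal (Real.cos θ ^ k) * F (Real.sin θ) := by
  have : Nontrivial E := Module.nontrivial_of_finrank_eq_succ hk.out
  let K : ℝ × ℝ → ℝ≥0∞ := fun p => unitRadialMass (k + 1) p.2 * F (p.1 / p.2)
  have hK : Measurable K := by fun_prop
  have sphere_side (y : Metric.sphere (0 : E) 1) : ∀ r ∈ Set.Ioi (0 : ℝ),
      ENNReal.ofReal (r ^ (k + 1)) * K (inner ℝ v (r • (y : E)), ‖r • (y : E)‖) =
        ENNReal.ofReal (r ^ (k + 1)) * (unitRadialMass (k + 1) r * F (inner ℝ v (y : E))) := by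
    intro r (hr : 0 < r)
    simp only [K, norm_smul, norm_eq_of_mem_sphere, mul_one, Real.norm_of_nonneg hr.le,
      inner_smul_right, mul_div_cancel_left₀ _ hr.ne']
  have latitude_side (θ : ℝ) : ∀ ρ ∈ Set.Ioi (0 : ℝ),
      ENNReal.ofReal (ρ ^ (k + 1)) * K (ρ * Real.sin θ, ρ) =
        ENNReal.ofReal (ρ ^ (k + 1)) * (unitRadialMass (k + 1) ρ * F (Real.sin θ)) := by
    intro ρ (hρ : 0 < ρ)
    simp only [K, mul_div_cancel_left₀ _ hρ.ne']
  have polar := lintegral_inner_norm_eq_polar (k := k) hv hK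
  rw [lintegral_eq_lintegral_toSphere volume (g := fun x => K (inner ℝ v x, ‖x‖)) (by fun_prop),
    hk.out, Nat.add_sub_cancel] at polar
  simpa only [setLIntegral_congr_fun measurableSet_Ioi (sphere_side _),
    setLIntegral_congr_fun measurableSet_Ioi (latitude_side _),
    lintegral_ofReal_pow_mul_unitRadialMass_mul] using polar

lemma map_inner_toSphere (hv : ‖v‖ = 1) :
    (volume : Measure E).toSphere.map (fun y => inner ℝ v y.1) =
      (volume : Measure (Submodule.span ℝ {v})ᗮ).toSphere Set.univ •
        ((volume.restrict (Set.Ioo (-(Real.pi / 2)) (Real.pi / 2))).withDensity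
          fun θ => ENNReal.ofReal (Real.cos θ ^ k)).map Real.sin := by
  refine Measure.ext_of_lintegral _ fun F hF => ?_
  rw [lintegral_map hF (by fun_prop), lintegral_inner_toSphere (k := k) hv hF,
    lintegral_smul_measure, lintegral_map hF (by fun_prop),
    lintegral_withDensity_eq_lintegral_mul _ (by fun_prop) (by fun_prop), smul_eq_mul]
  rfl

variable {F : Type*} [NormedAddCommGroup F] [NormedSpace ℝ F]

lemma integral_inner_toSphere (hv : ‖v‖ = 1) {f : ℝ → F} (hf : Continuous f) :
    ∫ y, f (inner ℝ v (y : E)) ∂(volume : Measure E).toSphere =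
      (volume : Measure (Submodule.span ℝ {v})ᗮ).toSphere.real Set.univ •
        ∫ θ in -(Real.pi / 2)..Real.pi / 2, Real.cos θ ^ k • f (Real.sin θ) := by
  rw [← integral_map (φ := fun y : Metric.sphere (0 : E) 1 => inner ℝ v (y : E)) (by fun_prop)
    hf.aestronglyMeasurable, map_inner_toSphere (k := k) hv, integral_smul_measure,
    integral_map (by fun_prop) hf.aestronglyMeasurable,
    integral_withDensity_eq_integral_toReal_smul (by fun_prop) (by simp),
    intervalIntegral.integral_of_le (by linarith [Real.pi_pos]), integral_Ioc_eq_integral_Ioo]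
  congr 1
  refine setIntegral_congr_fun measurableSet_Ioo fun θ hθ => ?_
  simp only [ENNReal.toReal_ofReal (pow_nonneg (Real.cos_pos_of_mem_Ioo hθ).le k)]

lemma exists_setIntegral_inner_hausdorffMeasure_sphere (hv : ‖v‖ = 1) :
    ∃ c : ℝ, 0 < c ∧ ∀ f : ℝ → F, Continuous f →
      ∫ y in Metric.sphere (0 : E) 1, f (inner ℝ v y) ∂μH[(k + 1 : ℕ)] =
        c • ∫ θ in -(Real.pi / 2)..Real.pi / 2, Real.cos θ ^ k • f (Real.sin θ) := by
  have hdim : Module.finrank ℝ (Submodule.span ℝ {v})ᗮ = k + 1 :=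
    finrank_orthogonal_span_singleton_of_norm_eq_one hv
  have : Nontrivial (Submodule.span ℝ {v})ᗮ := Module.nontrivial_of_finrank_eq_succ hdim
  obtain ⟨c, hc, hH⟩ := exists_hausdorffMeasure_eq_smul_toSphere (E := E) (d := k + 1)
  set total := (volume : Measure (Submodule.span ℝ {v})ᗮ).toSphere.real Set.univ
  have : NeZero (volume : Measure (Submodule.span ℝ {v})ᗮ).toSphere :=
    ⟨Measure.toSphere_ne_zero _⟩
  have htotal : 0 < total := measureReal_univ_pos
  refine ⟨c * total, by positivity, fun f hf => ?_⟩
  have hsub : (μH[(k + 1 : ℕ)] : Measure (Metric.sphere (0 : E) 1)).map Subtype.val =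
      μH[(k + 1 : ℕ)].restrict (Metric.sphere (0 : E) 1) := by
    rw [Isometry.map_hausdorffMeasure isometry_subtype_coe (Or.inl (Nat.cast_nonneg _)),
      Subtype.range_coe]
  rw [← hsub, integral_map (by fun_prop) (by fun_prop), hH, integral_smul_nnreal_measure,
    integral_inner_toSphere (k := k) hv hf, NNReal.smul_def, smul_smul]

theorem sphere_oscillatory_decay_optimal_general (hE : 2 ≤ Module.finrank ℝ E) (hv : ‖v‖ = 1)
    {b : ℕ} (hb : 3 ≤ b) :
    ∃ a₀ : ℝ, 0 < a₀ ∧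
      Tendsto (fun t : ℝ => t ^ (1 / b : ℝ) * ‖∫ y in Metric.sphere (0 : E) 1,
        Complex.exp (Complex.I * ↑(t * inner ℝ v y ^ b)) ∂μH[Module.finrank ℝ E - 1]‖)
        atTop (𝓝 a₀) := by
  obtain ⟨k, hk⟩ := Nat.exists_eq_add_of_le' hE
  have : Fact (Module.finrank ℝ E = k + 1 + 1) := ⟨hk⟩
  have hd : (Module.finrank ℝ E : ℝ) - 1 = (k + 1 : ℕ) := by rw [hk]; push_cast; ring
  obtain ⟨c, hc, hlatitude⟩ := exists_setIntegral_inner_hausdorffMeasure_sphere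
    (k := k) (F := ℂ) hv
  obtain ⟨a, ha, hlim⟩ := exists_tendsto_rpow_mul_norm_integral_cexp_sin_pow hb k
  refine ⟨c * a, mul_pos hc ha, (hlim.const_mul c).congr fun t => ?_⟩
  rw [hd, hlatitude (fun s => Complex.exp (Complex.I * ↑(t * s ^ b))) (by fun_prop), norm_smul,
    Real.norm_of_nonneg hc.le, mul_left_comm]

end LatitudeDistribution

/-- Optimality of the decay estimate for
`I(λ) = ∫_{𝕊^{n-1}} e^{i(λ₁ y₁^{β₁} + ⋯ + λₙ yₙ^{βₙ})} dσ(y)`: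
along `λ = (0,…,0,t)`, with `βₙ = β_max`, one has
`t^{1/β_max} |I(0,…,0,t)| → a₀ > 0` as `t → ∞`. -/
theorem sphere_oscillatory_decay_optimal (n : ℕ) (hn : 2 ≤ n) (β : Fin n → ℕ)
    (hβ : ∀ j, 3 ≤ β j) (N : Fin n) (hN : (N : ℕ) = n - 1)
    (hβmax : ∀ j, β j ≤ β N) :
    ∃ a₀ : ℝ, 0 < a₀ ∧
      Tendsto (fun t : ℝ =>
          t ^ ((1 : ℝ) / (β N : ℝ)) *
            ‖∫ y in Metric.sphere (0 : EuclideanSpace ℝ (Fin n)) 1,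
                Complex.exp (Complex.I * Complex.ofReal (t * (y N) ^ (β N)))
                  ∂(μH[(n : ℝ) - 1])‖)
        atTop (𝓝 a₀) := by
  simpa [EuclideanSpace.inner_single_left] using sphere_oscillatory_decay_optimal_general
    (v := EuclideanSpace.single N (1 : ℝ)) (by simpa using hn) (by simp) (hβ N)
end
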